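/- arXiv:math-ph/0503023 — 2 statements merged into one kernel-verified Lean document; each statement's English description precedes it below -/
import Mathlib

section
/- Theorem 1 (existence of the adjacency surface pressure): fix d ≥ 1 and x > 0, and for L ∈ ℕ let T_L = P_{Λ_{2L}} − 2^d P_{Λ_L} be the difference between the quenched pressure of the cube Λ_{2L} of side 2L (free boundary conditions) and the sum of the quenched pressures of the 2^d disjoint sub-cubes of side L composing it (which equals 2^d P_{Λ_L} since the sub-cube pressures coincide). Then the sequence T_L / L^{d−1} converges to a finite limit as L → ∞. -/
open MeasureTheory ProbabilityTheory Filter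

noncomputable section

/-- The real value ±1 of a Boolean spin. -/
def spin (s : Bool) : ℝ := if s then 1 else -1

/-- The quenched pressure `[ln Z]` on the Nishimori line of the Gaussian Edwards–Anderson
model with site set `V`, bond set `E` (a finite set of ordered pairs of sites), and all
parameters equal to `x`: the couplings `j_e`, `e ∈ E`, are independent Gaussians of mean `x`
and variance 1, and `Z(j) = Σ_S exp (Σ_{e∈E} x j_e S_{e.1} S_{e.2})`. -/
def EApressure {V : Type*} [Fintype V] [DecidableEq V] (E : Finset (V × V)) (x : ℝ) : ℝ :=
  ∫ j : {e // e ∈ E} → ℝ,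
    Real.log (∑ S : V → Bool,
      Real.exp (∑ e : {e // e ∈ E},
        x * j e * (spin (S (e : V × V).1) * spin (S (e : V × V).2))))
    ∂(Measure.pi fun _ : {e // e ∈ E} => gaussianReal x 1)

/-- The nearest-neighbor bonds of the cube `Λ_L = {0, …, L−1}^d` with free boundary
conditions: pairs `(n, n')` with `n' = n + eᵢ` for some direction `i` (no wrap-around). -/
def cubeBonds (d L : ℕ) : Finset ((Fin d → Fin L) × (Fin d → Fin L)) :=
  Finset.univ.filter fun p => ∃ i : Fin d,
    (∀ k, k ≠ i → p.2 k = p.1 k) ∧ ((p.2 i : ℕ) = (p.1 i : ℕ) + 1)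

/-- The nearest-neighbor bonds of the discrete torus `Π_L = (ℤ/Lℤ)^d`: pairs `(n, n')`
with `n' = n + eᵢ` modulo `L` in some direction `i`. -/
def torusBonds (d L : ℕ) : Finset ((Fin d → Fin L) × (Fin d → Fin L)) :=
  Finset.univ.filter fun p => ∃ i : Fin d,
    (∀ k, k ≠ i → p.2 k = p.1 k) ∧ ((p.2 i : ℕ) = ((p.1 i : ℕ) + 1) % L)

/-!
Up to an explicit factor the partition function of a bond set `E` is the density `D_E` of couplings
planted around a uniformly random hidden configuration, relative to centered Gaussian couplings. By
gauge invariance its mean logarithm on the Nishimori line is the relative entropy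
`∫ D_E log D_E`. Gibbs' inequality for `D_{E ∪ F}` against the probability density
`D_E D_F / D_{E ∩ F}` shows that the pressure is supermodular in the bond set.

Consequently the pressure gained by joining two halves of a box across a hyperplane is at least the
sum of the gains of disjoint sub-boxes straddling that hyperplane, while it is at most a constant
times the number of bonds crossing it. A multidimensional Fekete argument then gives the limit of
gain per unit area when all sides of the box grow proportionally, and doubling the cube in one
direction at a time expresses `T_L` as a fixed linear combination of such gains.
-/

open scoped BigOperators

section ProductMeasure

variable {ι κ : Type*} [Fintype ι] [Fintype κ] {Ω : κ → Type*} [∀ k, MeasurableSpace (Ω k)]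
  {E : Type*} [NormedAddCommGroup E] [NormedSpace ℝ E]

theorem measure_pi_map_comp_injective (μ : (k : κ) → Measure (Ω k))
    [∀ k, IsProbabilityMeasure (μ k)] {f : ι → κ} (hf : Function.Injective f) :
    (Measure.pi μ).map (fun j i => j (f i)) = Measure.pi fun i => μ (f i) := by
  have hindep : iIndepFun (fun k (j : (k : κ) → Ω k) => j k) (Measure.pi μ) :=
    iIndepFun_pi (X := fun _ => id) fun _ => aemeasurable_id
  rw [(iIndepFun_iff_map_fun_eq_pi_map fun i => (measurable_pi_apply (f i)).aemeasurable).1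
    (hindep.precomp hf)]
  exact congrArg Measure.pi (funext fun i => (measurePreserving_eval μ (f i)).map_eq)

theorem integral_pi_congr_of_dependsOn {μ ν : (k : κ) → Measure (Ω k)}
    [∀ k, IsProbabilityMeasure (μ k)] [∀ k, IsProbabilityMeasure (ν k)] {A : Set κ}
    (hμν : ∀ k ∈ A, μ k = ν k) {h : ((k : κ) → Ω k) → E} (hm : StronglyMeasurable h)
    (hA : DependsOn h A) : ∫ j, h j ∂Measure.pi μ = ∫ j, h j ∂Measure.pi ν := by
  classical
  have base (k : κ) : Ω k := (nonempty_of_isProbabilityMeasure (μ k)).some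
  let freeze (k : κ) (y : Ω k) : Ω k := if k ∈ A then y else base k
  have freeze_meas (k : κ) : Measurable (freeze k) := by
    by_cases hk : k ∈ A
    · simpa only [freeze, hk, if_true] using measurable_id'
    · simpa only [freeze, hk, if_false] using measurable_const
  have freeze_meas_pi : Measurable fun (j : (k : κ) → Ω k) k => freeze k (j k) :=
    measurable_pi_lambda _ fun k => (freeze_meas k).comp (measurable_pi_apply k)
  have freeze_map (k : κ) : (μ k).map (freeze k) = (ν k).map (freeze k) := by
    by_cases hk : k ∈ A
    · rw [hμν k hk]
    · simp only [freeze, hk, if_false, Measure.map_const, measure_univ]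
  have integral_freeze (ρ : (k : κ) → Measure (Ω k)) [∀ k, IsProbabilityMeasure (ρ k)] :
      ∫ j, h j ∂Measure.pi ρ = ∫ j, h j ∂Measure.pi fun k => (ρ k).map (freeze k) := by
    have (k : κ) : IsProbabilityMeasure ((ρ k).map (freeze k)) :=
      Measure.isProbabilityMeasure_map (freeze_meas k).aemeasurable
    rw [← Measure.pi_map_pi fun k => (freeze_meas k).aemeasurable,
      integral_map freeze_meas_pi.aemeasurable hm.aestronglyMeasurable]
    exact integral_congr_ae (.of_forall fun j => hA fun k hk => by simp only [freeze, hk, if_true])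
  simp_rw [integral_freeze μ, integral_freeze ν, freeze_map]

end ProductMeasure

section GaussianCouplings

variable {ι : Type*} [Fintype ι]

/-- The law of independent couplings of variance `1` with means `c`. -/
def gaussianCouplings (c : ι → ℝ) : Measure (ι → ℝ) :=
  Measure.pi fun e => gaussianReal (c e) 1

instance (c : ι → ℝ) : IsProbabilityMeasure (gaussianCouplings c) := by
  unfold gaussianCouplings; infer_instance

theorem gaussianReal_eq_withDensity_centered (c : ℝ) : gaussianReal c 1 =
    (gaussianReal 0 1).withDensity fun y => ENNReal.ofReal (Real.exp (c * y - c ^ 2 / 2)) := by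
  rw [gaussianReal_of_var_ne_zero _ one_ne_zero, gaussianReal_of_var_ne_zero _ one_ne_zero,
    ← withDensity_mul _ (measurable_gaussianPDF _ _) (by fun_prop)]
  refine congrArg _ (funext fun y => ?_)
  rw [Pi.mul_apply, gaussianPDF, gaussianPDF, ← ENNReal.ofReal_mul (gaussianPDFReal_nonneg _ _ _),
    gaussianPDFReal, gaussianPDFReal, mul_assoc _ (Real.exp _) (Real.exp _),
    ← Real.exp_add]
  congr 3
  rw [NNReal.coe_one]
  ring

theorem integrable_exp_affine_gaussianReal (m t a : ℝ) :
    Integrable (fun y => Real.exp (t * y - a)) (gaussianReal m 1) := by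
  simpa only [sub_eq_add_neg, Real.exp_add] using
    (integrable_exp_mul_gaussianReal (μ := m) (v := 1) t).mul_const (Real.exp (-a))

theorem gaussianCouplings_eq_withDensity_centered (c : ι → ℝ) : gaussianCouplings c =
    (gaussianCouplings 0).withDensity fun j =>
      ENNReal.ofReal (∏ e, Real.exp (c e * j e - c e ^ 2 / 2)) := by
  refine Measure.pi_eq fun s hs => ?_
  have hint (e : ι) : Integrable (fun y => Real.exp (c e * y - c e ^ 2 / 2))
      ((gaussianReal ((0 : ι → ℝ) e) 1).restrict (s e)) :=
    (integrable_exp_affine_gaussianReal _ _ _).restrict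
  rw [gaussianCouplings, withDensity_apply _ (MeasurableSet.univ_pi hs), Measure.restrict_pi_pi,
    ← ofReal_integral_eq_lintegral_ofReal (Integrable.fintype_prod_dep hint)
      (.of_forall fun j => Finset.prod_nonneg fun e _ => (Real.exp_pos _).le),
    integral_fintype_prod_eq_prod (f := fun e y => Real.exp (c e * y - c e ^ 2 / 2)),
    ENNReal.ofReal_prod_of_nonneg fun e _ => integral_nonneg fun _ => (Real.exp_pos _).le]
  refine Finset.prod_congr rfl fun e _ => ?_
  rw [gaussianReal_eq_withDensity_centered (c e), withDensity_apply _ (hs e),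
    ofReal_integral_eq_lintegral_ofReal (hint e) (.of_forall fun _ => (Real.exp_pos _).le)]
  rfl

theorem integral_gaussianCouplings_eq_centered (c : ι → ℝ) (h : (ι → ℝ) → ℝ) :
    ∫ j, h j ∂gaussianCouplings c =
      ∫ j, (∏ e, Real.exp (c e * j e - c e ^ 2 / 2)) * h j ∂gaussianCouplings 0 := by
  rw [gaussianCouplings_eq_withDensity_centered c,
    integral_withDensity_eq_integral_toReal_smul (by fun_prop)
      (.of_forall fun _ => ENNReal.ofReal_lt_top)]
  simp only [ENNReal.toReal_ofReal (Finset.prod_nonneg fun _ _ => (Real.exp_pos _).le),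
    smul_eq_mul]

theorem integral_gaussianCouplings_sign_mul (c : ι → ℝ) {s : ι → ℝ} (hs : ∀ e, s e ^ 2 = 1)
    {h : (ι → ℝ) → ℝ} (hh : Measurable h) :
    ∫ j, h (fun e => s e * j e) ∂gaussianCouplings c =
      ∫ j, h j ∂gaussianCouplings fun e => s e * c e := by
  have map_coord (e : ι) :
      (gaussianReal (c e) 1).map (fun y => s e * y) = gaussianReal (s e * c e) 1 := by
    rw [gaussianReal_map_const_mul]
    exact congrArg _ (NNReal.eq (by simp [hs e]))
  have sigmaFinite_map (e : ι) : SigmaFinite ((gaussianReal (c e) 1).map (fun y => s e * y)) := by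
    rw [map_coord]; infer_instance
  have map_couplings : (gaussianCouplings c).map (fun j e => s e * j e) =
      gaussianCouplings fun e => s e * c e := by
    rw [gaussianCouplings, Measure.pi_map_pi (f := fun e y => s e * y) fun e => by fun_prop]
    simp_rw [map_coord, gaussianCouplings]
  rw [← map_couplings, integral_map (Measurable.aemeasurable (by fun_prop)) hh.aestronglyMeasurable]

theorem integrable_exp_mul_sum_abs (c : ι → ℝ) (k : ℝ) :
    Integrable (fun j : ι → ℝ => Real.exp (k * ∑ e, |j e|)) (gaussianCouplings c) := by
  have coord (e : ι) : Integrable (fun y => Real.exp (k * |y|)) (gaussianReal (c e) 1) :=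
    integrable_exp_mul_abs (integrable_exp_mul_gaussianReal k)
      (integrable_exp_mul_gaussianReal (-k))
  simpa only [Finset.mul_sum, Real.exp_sum, gaussianCouplings] using
    Integrable.fintype_prod_dep coord

theorem measurePreserving_gaussianCouplings_eval (c : ι → ℝ) (e : ι) :
    MeasurePreserving (fun j : ι → ℝ => j e) (gaussianCouplings c) (gaussianReal (c e) 1) :=
  measurePreserving_eval (fun e => gaussianReal (c e) 1) e

theorem integrable_abs_coupling (c : ι → ℝ) (e : ι) :
    Integrable (fun j : ι → ℝ => |j e|) (gaussianCouplings c) :=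
  (measurePreserving_gaussianCouplings_eval c e).integrable_comp_of_integrable
    ((memLp_id_gaussianReal 1).integrable le_rfl).abs

theorem integral_abs_coupling (c : ι → ℝ) (e : ι) :
    ∫ j, |j e| ∂gaussianCouplings c = ∫ y, |y| ∂gaussianReal (c e) 1 := by
  rw [← (measurePreserving_gaussianCouplings_eval c e).map_eq,
    integral_map (measurable_pi_apply e).aemeasurable (by fun_prop)]

/-- A positive function of the couplings whose logarithm grows at most linearly. Such functions
form a group under multiplication, are stable under averaging, and are integrable together with
their logarithms against every `gaussianCouplings`. -/
structure HasLinearLogGrowth (f : (ι → ℝ) → ℝ) : Prop where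
  measurable : Measurable f
  pos : ∀ j, 0 < f j
  bound : ∃ C, ∀ j, |Real.log (f j)| ≤ C * (1 + ∑ e, |j e|)

namespace HasLinearLogGrowth

variable {f g : (ι → ℝ) → ℝ}

theorem exp_affine (e : ι) (a b : ℝ) :
    HasLinearLogGrowth fun j : ι → ℝ => Real.exp (a * j e + b) where
  measurable := by fun_prop
  pos _ := Real.exp_pos _
  bound := by
    refine ⟨|a| + |b|, fun j => ?_⟩
    have hcoord : |j e| ≤ ∑ e, |j e| :=
      Finset.single_le_sum (f := fun e => |j e|) (fun _ _ => abs_nonneg _) (Finset.mem_univ e)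
    rw [Real.log_exp]
    calc |a * j e + b| ≤ |a * j e| + |b| := abs_add_le _ _
      _ ≤ |a| * ∑ e, |j e| + |b| := by rw [abs_mul]; gcongr
      _ ≤ (|a| + |b|) * (1 + ∑ e, |j e|) := by
        nlinarith [abs_nonneg a, mul_nonneg (abs_nonneg b) ((abs_nonneg _).trans hcoord)]

theorem one : HasLinearLogGrowth fun _ : ι → ℝ => 1 where
  measurable := measurable_const
  pos _ := one_pos
  bound := ⟨0, fun _ => by simp⟩

theorem mul (hf : HasLinearLogGrowth f) (hg : HasLinearLogGrowth g) :
    HasLinearLogGrowth fun j => f j * g j where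
  measurable := hf.measurable.mul hg.measurable
  pos j := mul_pos (hf.pos j) (hg.pos j)
  bound := by
    obtain ⟨C, hC⟩ := hf.bound
    obtain ⟨D, hD⟩ := hg.bound
    refine ⟨C + D, fun j => ?_⟩
    rw [Real.log_mul (hf.pos j).ne' (hg.pos j).ne', add_mul]
    exact (abs_add_le _ _).trans (add_le_add (hC j) (hD j))

theorem inv (hf : HasLinearLogGrowth f) : HasLinearLogGrowth fun j => (f j)⁻¹ where
  measurable := hf.measurable.inv
  pos j := inv_pos.2 (hf.pos j)
  bound := by simpa only [Real.log_inv, abs_neg] using hf.bound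

theorem prod {α : Type*} {s : Finset α} {F : α → (ι → ℝ) → ℝ}
    (hF : ∀ a ∈ s, HasLinearLogGrowth (F a)) : HasLinearLogGrowth fun j => ∏ a ∈ s, F a j := by
  classical
  induction s using Finset.induction_on with
  | empty => simpa only [Finset.prod_empty] using one
  | insert a s ha ih =>
    simp only [Finset.prod_insert ha]
    exact (hF a (Finset.mem_insert_self a s)).mul
      (ih fun b hb => hF b (Finset.mem_insert_of_mem hb))

theorem exp_neg_le_and_le_exp {C : ℝ} {j : ι → ℝ} (hf : HasLinearLogGrowth f)
    (hC : |Real.log (f j)| ≤ C) : Real.exp (-C) ≤ f j ∧ f j ≤ Real.exp C := by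
  rw [← Real.le_log_iff_exp_le (hf.pos j), ← Real.log_le_iff_le_exp (hf.pos j)]
  exact abs_le.1 hC

theorem expect {α : Type*} [Fintype α] [Nonempty α] {F : α → (ι → ℝ) → ℝ}
    (hF : ∀ a, HasLinearLogGrowth (F a)) : HasLinearLogGrowth fun j => 𝔼 a, F a j where
  measurable := by
    simp only [Fintype.expect_eq_sum_div_card]
    exact (Finset.measurable_fun_sum _ fun a _ => (hF a).measurable).div_const _
  pos j := Finset.expect_pos (fun a _ => (hF a).pos j) Finset.univ_nonempty
  bound := by
    choose C hC using fun a => (hF a).bound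
    refine ⟨∑ a, |C a|, fun j => ?_⟩
    have bound_term (a : α) : |Real.log (F a j)| ≤ (∑ a, |C a|) * (1 + ∑ e, |j e|) :=
      (hC a j).trans (mul_le_mul_of_nonneg_right ((le_abs_self _).trans
        (Finset.single_le_sum (f := fun a => |C a|) (fun _ _ => abs_nonneg _) (Finset.mem_univ a)))
        (by positivity))
    have between (a : α) := (hF a).exp_neg_le_and_le_exp (bound_term a)
    have expect_pos : 0 < 𝔼 a, F a j :=
      Finset.expect_pos (fun a _ => (hF a).pos j) Finset.univ_nonempty
    rw [abs_le, Real.le_log_iff_exp_le expect_pos, Real.log_le_iff_le_exp expect_pos]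
    exact ⟨Finset.le_expect Finset.univ_nonempty fun a _ => (between a).1,
      Finset.expect_le Finset.univ_nonempty fun a _ => (between a).2⟩

theorem integrable (hf : HasLinearLogGrowth f) (c : ι → ℝ) :
    Integrable f (gaussianCouplings c) := by
  obtain ⟨C, hC⟩ := hf.bound
  refine ((integrable_exp_mul_sum_abs c C).const_mul (Real.exp C)).mono'
    hf.measurable.aestronglyMeasurable (.of_forall fun j => ?_)
  rw [Real.norm_of_nonneg (hf.pos j).le, ← Real.exp_add]
  exact (hf.exp_neg_le_and_le_exp (hC j)).2.trans_eq (by ring_nf)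

theorem integrable_mul_log (hf : HasLinearLogGrowth f) (hg : HasLinearLogGrowth g) (c : ι → ℝ) :
    Integrable (fun j => f j * Real.log (g j)) (gaussianCouplings c) := by
  refine ((hf.mul hg).integrable c |>.add ((hf.mul hg.inv).integrable c)).mono'
    (hf.measurable.mul hg.measurable.log).aestronglyMeasurable (.of_forall fun j => ?_)
  have abs_log_le : |Real.log (g j)| ≤ g j + (g j)⁻¹ := by
    have hpos := hg.pos j
    have := inv_pos.2 hpos
    rw [abs_le]
    constructor
    · linarith [Real.one_sub_inv_le_log_of_pos hpos]
    · linarith [Real.log_le_sub_one_of_pos hpos]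
  rw [Real.norm_eq_abs, abs_mul, abs_of_pos (hf.pos j), Pi.add_apply, ← mul_add]
  exact mul_le_mul_of_nonneg_left abs_log_le (hf.pos j).le

theorem integrable_log (hf : HasLinearLogGrowth f) (c : ι → ℝ) :
    Integrable (fun j => Real.log (f j)) (gaussianCouplings c) := by
  simpa only [one_mul] using one.integrable_mul_log hf c

end HasLinearLogGrowth

end GaussianCouplings

section Averages

variable {V W X K : Type*} [Fintype V] [DecidableEq V] [Fintype W] [DecidableEq W]
  [Fintype X] [Field K] [CharZero K]

theorem expect_comp_embedding [Nonempty X] (φ : V ↪ W) (g : (V → X) → K) :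
    𝔼 S : W → X, g (S ∘ φ) = 𝔼 S : V → X, g S := by
  have extend_comp (S : V → X) (T : W → X) : Function.extend φ S T ∘ φ = S :=
    funext fun v => φ.injective.extend_apply _ _ _
  have extend_extend (S : V → X) (T : W → X) :
      Function.extend φ (T ∘ φ) (Function.extend φ S T) = T := by
    funext w
    by_cases hw : ∃ v, φ v = w
    · obtain ⟨v, rfl⟩ := hw
      exact φ.injective.extend_apply _ _ _
    · rw [Function.extend_apply' _ _ _ hw, Function.extend_apply' _ _ _ hw]
  let swap : (V → X) × (W → X) ≃ (V → X) × (W → X) :=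
    Function.Involutive.toPerm (fun p => (p.2 ∘ φ, Function.extend φ p.1 p.2))
      fun p => Prod.ext (extend_comp _ _) (extend_extend _ _)
  calc 𝔼 S : W → X, g (S ∘ φ) = 𝔼 p : (V → X) × (W → X), g (p.2 ∘ φ) := by
        rw [← Finset.univ_product_univ, Finset.expect_product]
        exact (Fintype.expect_const _).symm
    _ = 𝔼 p : (V → X) × (W → X), g p.1 := Fintype.expect_equiv swap _ _ fun _ => rfl
    _ = 𝔼 S : V → X, g S := by
        rw [← Finset.univ_product_univ, Finset.expect_product]
        simp only [Fintype.expect_const]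

theorem expect_mul_of_dependsOn_compl {f g : (V → X) → K} {A : Finset V}
    (hf : DependsOn f A) (hg : DependsOn g (Aᶜ : Finset V)) :
    𝔼 S, f S * g S = (𝔼 S, f S) * 𝔼 S, g S := by
  have piecewise_piecewise (S T : V → X) :
      A.piecewise (A.piecewise S T) (A.piecewise T S) = S := by
    funext v; by_cases hv : v ∈ A <;> simp [hv]
  let swap : (V → X) × (V → X) ≃ (V → X) × (V → X) :=
    Function.Involutive.toPerm (fun p => (A.piecewise p.1 p.2, A.piecewise p.2 p.1))
      fun p => Prod.ext (piecewise_piecewise _ _) (piecewise_piecewise _ _)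
  rcases isEmpty_or_nonempty (V → X) with _ | _
  · simp only [Finset.univ_eq_empty, Finset.expect_empty, mul_zero]
  calc 𝔼 S, f S * g S = 𝔼 p : (V → X) × (V → X), f p.1 * g p.1 := by
        rw [← Finset.univ_product_univ, Finset.expect_product]
        simp only [Fintype.expect_const]
    _ = 𝔼 p : (V → X) × (V → X), f p.1 * g p.2 := by
        refine Fintype.expect_equiv swap _ _ fun p => ?_
        rw [hf (y := A.piecewise p.1 p.2) fun v hv => (A.piecewise_eq_of_mem _ _ hv).symm,
          hg (y := A.piecewise p.2 p.1) fun v hv =>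
            (A.piecewise_eq_of_notMem _ _ (Finset.mem_compl.1 hv)).symm]
        rfl
    _ = (𝔼 S, f S) * 𝔼 S, g S := by
        rw [← Finset.univ_product_univ, Finset.expect_product]
        simp only [← Finset.mul_expect, ← Finset.expect_mul]

end Averages

theorem integral_mul_log_le_integral_mul_log_self {Ω : Type*} {mΩ : MeasurableSpace Ω}
    {μ : Measure Ω} {u v : Ω → ℝ} (hu : ∀ ω, 0 < u ω) (hv : ∀ ω, 0 < v ω)
    (hu_int : Integrable u μ) (hv_int : Integrable v μ)
    (hu_log : Integrable (fun ω => u ω * Real.log (u ω)) μ)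
    (hv_log : Integrable (fun ω => u ω * Real.log (v ω)) μ)
    (hle : ∫ ω, v ω ∂μ ≤ ∫ ω, u ω ∂μ) :
    ∫ ω, u ω * Real.log (v ω) ∂μ ≤ ∫ ω, u ω * Real.log (u ω) ∂μ := by
  have pointwise (ω : Ω) : u ω - v ω ≤ u ω * Real.log (u ω) - u ω * Real.log (v ω) := by
    have hlog := Real.one_sub_inv_le_log_of_pos (div_pos (hu ω) (hv ω))
    rw [Real.log_div (hu ω).ne' (hv ω).ne', inv_div] at hlog
    calc u ω - v ω = u ω * (1 - v ω / u ω) := by have := (hu ω).ne'; field_simp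
      _ ≤ u ω * (Real.log (u ω) - Real.log (v ω)) := by gcongr; exact (hu ω).le
      _ = u ω * Real.log (u ω) - u ω * Real.log (v ω) := mul_sub _ _ _
  have := integral_mono (hu_int.sub hv_int) (hu_log.sub hv_log) pointwise
  simp only [Pi.sub_apply] at this
  rw [integral_sub hu_int hv_int, integral_sub hu_log hv_log] at this
  linarith

section PlantedModel

variable {V : Type*} {x : ℝ} {E : Finset (V × V)} {S : V → Bool} {e : V × V}

/-- The bond variable `S_b = S_n S_{n'}`. -/
def bondSpin (S : V → Bool) (e : V × V) : ℝ := spin (S e.1) * spin (S e.2)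

theorem spin_beq (a b : Bool) : spin (a == b) = spin a * spin b := by
  cases a <;> cases b <;> norm_num [spin]

theorem bondSpin_sq (S : V → Bool) (e : V × V) : bondSpin S e ^ 2 = 1 := by
  unfold bondSpin spin
  split_ifs <;> norm_num

theorem abs_bondSpin (S : V → Bool) (e : V × V) : |bondSpin S e| = 1 := by
  rw [← abs_one (α := ℝ), ← sq_eq_sq_iff_abs_eq_abs, bondSpin_sq, one_pow]

theorem bondSpin_beq (S T : V → Bool) (e : V × V) :
    bondSpin (fun v => S v == T v) e = bondSpin S e * bondSpin T e := by
  simp only [bondSpin, spin_beq]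
  ring

/-- The density, relative to centered Gaussian couplings, of couplings which on the bonds of `E`
are planted around the spin configuration `S`. -/
def likelihood (x : ℝ) (E : Finset (V × V)) (S : V → Bool) (j : V × V → ℝ) : ℝ :=
  ∏ e ∈ E, Real.exp (x * bondSpin S e * j e - x ^ 2 / 2)

theorem dependsOn_likelihood (x : ℝ) (E : Finset (V × V)) (S : V → Bool) :
    DependsOn (likelihood x E S) E := fun _ _ h =>
  Finset.prod_congr rfl fun e he => by rw [h e he]

theorem dependsOn_likelihood_spins (x : ℝ) (j : V × V → ℝ) {A : Set V}
    (hE : ∀ e ∈ E, e.1 ∈ A ∧ e.2 ∈ A) : DependsOn (fun S => likelihood x E S j) A := fun S T h =>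
  Finset.prod_congr rfl fun e he => by
    rw [bondSpin, bondSpin, h e.1 (hE e he).1, h e.2 (hE e he).2]

theorem hasLinearLogGrowth_likelihood [Fintype V] (x : ℝ) (E : Finset (V × V)) (S : V → Bool) :
    HasLinearLogGrowth (likelihood x E S) :=
  .prod fun e _ => .exp_affine e (x * bondSpin S e) (-(x ^ 2 / 2))

variable [DecidableEq V]

theorem likelihood_union {F : Finset (V × V)} (hEF : Disjoint E F) (S : V → Bool)
    (j : V × V → ℝ) : likelihood x (E ∪ F) S j = likelihood x E S j * likelihood x F S j :=
  Finset.prod_union hEF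

/-- The means of couplings planted around `S` on `E` and centered elsewhere. -/
def plantedMean (x : ℝ) (E : Finset (V × V)) (S : V → Bool) (e : V × V) : ℝ :=
  if e ∈ E then x * bondSpin S e else 0

theorem prod_exp_plantedMean [Fintype V] (x : ℝ) (E : Finset (V × V)) (S : V → Bool)
    (j : V × V → ℝ) :
    ∏ e, Real.exp (plantedMean x E S e * j e - plantedMean x E S e ^ 2 / 2) =
      likelihood x E S j := by
  rw [likelihood, ← Finset.prod_subset (Finset.subset_univ E) fun e _ he => by
    simp [plantedMean, he]]
  refine Finset.prod_congr rfl fun e he => ?_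
  rw [plantedMean, if_pos he, mul_pow, bondSpin_sq, mul_one]

variable [Fintype V]

/-- The density of planted couplings around a uniformly random hidden configuration, relative to
centered Gaussian couplings; up to an explicit factor it is the partition function. -/
def evidence (x : ℝ) (E : Finset (V × V)) (j : V × V → ℝ) : ℝ := 𝔼 S, likelihood x E S j

theorem dependsOn_evidence (x : ℝ) (E : Finset (V × V)) : DependsOn (evidence x E) E :=
  fun _ _ h => Finset.expect_congr rfl fun S _ => dependsOn_likelihood x E S h

theorem hasLinearLogGrowth_evidence (x : ℝ) (E : Finset (V × V)) :
    HasLinearLogGrowth (evidence x E) :=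
  .expect fun S => hasLinearLogGrowth_likelihood x E S

theorem evidence_gauge (x : ℝ) (E : Finset (V × V)) (T : V → Bool) (j : V × V → ℝ) :
    evidence x E (fun e => bondSpin T e * j e) = evidence x E j := by
  have beq_involutive : Function.Involutive fun (S : V → Bool) v => S v == T v :=
    fun S => funext fun v => by cases hS : S v <;> cases hT : T v <;> simp [hS, hT]
  refine Fintype.expect_equiv (beq_involutive.toPerm _) _ _ fun S =>
    Finset.prod_congr rfl fun e _ => ?_
  rw [Function.Involutive.coe_toPerm, bondSpin_beq]
  ring_nf

theorem integral_evidence_mul {h : (V × V → ℝ) → ℝ}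
    (hint : ∀ S, Integrable (fun j => likelihood x E S j * h j) (gaussianCouplings 0)) :
    ∫ j, evidence x E j * h j ∂gaussianCouplings 0 =
      𝔼 S, ∫ j, h j ∂gaussianCouplings (plantedMean x E S) := by
  simp_rw [evidence, Finset.expect_mul, integral_gaussianCouplings_eq_centered (plantedMean _ _ _),
    prod_exp_plantedMean, Fintype.expect_eq_sum_div_card, integral_div]
  rw [integral_finsetSum _ fun S _ => hint S]

theorem integral_evidence_mul_inter (B : Finset (V × V)) {h : (V × V → ℝ) → ℝ}
    (hm : Measurable h) (hB : DependsOn h B)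
    (hint : ∀ (F : Finset (V × V)) S,
      Integrable (fun j => likelihood x F S j * h j) (gaussianCouplings 0)) :
    ∫ j, evidence x E j * h j ∂gaussianCouplings 0 =
      ∫ j, evidence x (E ∩ B) j * h j ∂gaussianCouplings 0 := by
  rw [integral_evidence_mul (hint E), integral_evidence_mul (hint (E ∩ B))]
  refine Finset.expect_congr rfl fun S _ =>
    integral_pi_congr_of_dependsOn (fun e he => ?_) hm.stronglyMeasurable hB
  simp only [plantedMean, Finset.mem_inter, Finset.mem_coe.1 he, and_true]

theorem integral_evidence (x : ℝ) (E : Finset (V × V)) :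
    ∫ j, evidence x E j ∂gaussianCouplings 0 = 1 := by
  have := integral_evidence_mul (x := x) (E := E) (h := fun _ => 1) fun S => by
    simpa only [mul_one] using (hasLinearLogGrowth_likelihood x E S).integrable 0
  simpa using this

/-- The expected log-evidence of Nishimori couplings, all of mean `x`. -/
def meanLogEvidence (x : ℝ) (E : Finset (V × V)) : ℝ :=
  ∫ j, Real.log (evidence x E j) ∂gaussianCouplings fun _ => x

/-- The Nishimori identity: by gauge invariance, every hidden configuration contributes as much as
the ferromagnetic one. -/
theorem integral_evidence_mul_log_evidence {A : Finset (V × V)} (hA : A ⊆ E) :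
    ∫ j, evidence x E j * Real.log (evidence x A j) ∂gaussianCouplings 0 =
      meanLogEvidence x A := by
  have hm : Measurable fun j => Real.log (evidence x A j) :=
    (hasLinearLogGrowth_evidence x A).measurable.log
  rw [integral_evidence_mul fun S => (hasLinearLogGrowth_likelihood x E S).integrable_mul_log
    (hasLinearLogGrowth_evidence x A) 0]
  have planted_eq (S : V → Bool) :
      ∫ j, Real.log (evidence x A j) ∂gaussianCouplings (plantedMean x E S) =
        meanLogEvidence x A := by
    have flip := integral_gaussianCouplings_sign_mul (fun _ => x) (bondSpin_sq S) hm
    simp only [evidence_gauge] at flip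
    rw [meanLogEvidence, flip]
    refine integral_pi_congr_of_dependsOn (A := A) (fun e he => ?_) hm.stronglyMeasurable
      fun j j' h => by rw [dependsOn_evidence x A h]
    rw [plantedMean, if_pos (hA he), mul_comm]
  simp only [planted_eq, Fintype.expect_const]

theorem integral_evidence_mul_log_le {v : (V × V → ℝ) → ℝ} (hv : HasLinearLogGrowth v)
    (hle : ∫ j, v j ∂gaussianCouplings 0 ≤ 1) :
    ∫ j, evidence x E j * Real.log (v j) ∂gaussianCouplings 0 ≤ meanLogEvidence x E := by
  have hE := hasLinearLogGrowth_evidence x E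
  rw [← integral_evidence_mul_log_evidence (x := x) (Finset.Subset.refl E)]
  exact integral_mul_log_le_integral_mul_log_self hE.pos hv.pos (hE.integrable 0)
    (hv.integrable 0) (hE.integrable_mul_log hE 0) (hE.integrable_mul_log hv 0)
    (hle.trans_eq (integral_evidence x E).symm)

theorem meanLogEvidence_mono {A : Finset (V × V)} (hA : A ⊆ E) :
    meanLogEvidence x A ≤ meanLogEvidence x E := by
  rw [← integral_evidence_mul_log_evidence hA]
  exact integral_evidence_mul_log_le (hasLinearLogGrowth_evidence x A)
    (integral_evidence x A).le

/-- The density in question makes the couplings of `E` and of `F` conditionally independent given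
those of `E ∩ F`. -/
theorem integral_evidence_mul_div_inter (x : ℝ) (E F : Finset (V × V)) :
    ∫ j, evidence x E j * (evidence x F j * (evidence x (E ∩ F) j)⁻¹) ∂gaussianCouplings 0 = 1 := by
  have hF := hasLinearLogGrowth_evidence x F
  have hEF := hasLinearLogGrowth_evidence x (E ∩ F)
  have hratio := hF.mul hEF.inv
  rw [integral_evidence_mul_inter F hratio.measurable _ fun A S =>
    ((hasLinearLogGrowth_likelihood x A S).mul hratio).integrable 0]
  · simp_rw [mul_comm (evidence x F _), mul_inv_cancel_left₀ (hEF.pos _).ne', integral_evidence]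
  · intro j j' h
    simp only [dependsOn_evidence x F h,
      dependsOn_evidence x (E ∩ F) fun e he => h e (Finset.inter_subset_right he)]

theorem meanLogEvidence_supermodular (x : ℝ) (E F : Finset (V × V)) :
    meanLogEvidence x E + meanLogEvidence x F ≤
      meanLogEvidence x (E ∪ F) + meanLogEvidence x (E ∩ F) := by
  have growth := hasLinearLogGrowth_evidence (V := V) x
  have int_log (A : Finset (V × V)) :
      Integrable (fun j => evidence x (E ∪ F) j * Real.log (evidence x A j))
        (gaussianCouplings 0) :=
    (growth (E ∪ F)).integrable_mul_log (growth A) 0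
  have gibbs := integral_evidence_mul_log_le (x := x) (E := E ∪ F)
    ((growth E).mul ((growth F).mul (growth (E ∩ F)).inv))
    (integral_evidence_mul_div_inter x E F).le
  have log_ratio (j : V × V → ℝ) : evidence x (E ∪ F) j *
      Real.log (evidence x E j * (evidence x F j * (evidence x (E ∩ F) j)⁻¹)) =
      evidence x (E ∪ F) j * Real.log (evidence x E j) +
        (evidence x (E ∪ F) j * Real.log (evidence x F j) -
          evidence x (E ∪ F) j * Real.log (evidence x (E ∩ F) j)) := by
    have pos (A : Finset (V × V)) := (growth A).pos j
    rw [Real.log_mul (pos _).ne' (mul_pos (pos _) (inv_pos.2 (pos _))).ne',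
      Real.log_mul (pos _).ne' (inv_pos.2 (pos _)).ne', Real.log_inv]
    ring
  simp only [log_ratio] at gibbs
  rw [integral_add (int_log E) (by exact (int_log F).sub (int_log (E ∩ F))),
    integral_sub (int_log F) (int_log (E ∩ F)),
    integral_evidence_mul_log_evidence Finset.subset_union_left,
    integral_evidence_mul_log_evidence Finset.subset_union_right,
    integral_evidence_mul_log_evidence (Finset.inter_subset_left.trans Finset.subset_union_left)]
    at gibbs
  linarith

end PlantedModel

section ReducedPressure

variable {V W : Type*} [Fintype V] [DecidableEq V] [Fintype W] [DecidableEq W]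
  {x : ℝ} {E F : Finset (V × V)}

theorem partition_eq_evidence (x : ℝ) (E : Finset (V × V)) (j : V × V → ℝ) :
    ∑ S : V → Bool, Real.exp (∑ e : {e // e ∈ E},
        x * j e * (spin (S (e : V × V).1) * spin (S (e : V × V).2))) =
      2 ^ Fintype.card V * (Real.exp (E.card * (x ^ 2 / 2)) * evidence x E j) := by
  have boltzmann_eq (S : V → Bool) : Real.exp (∑ e : {e // e ∈ E},
      x * j e * (spin (S (e : V × V).1) * spin (S (e : V × V).2))) =
        Real.exp (E.card * (x ^ 2 / 2)) * likelihood x E S j := by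
    rw [Finset.sum_coe_sort E fun e => x * j e * (spin (S e.1) * spin (S e.2)), likelihood,
      ← Real.exp_sum, ← Real.exp_add, Finset.sum_sub_distrib, Finset.sum_const, nsmul_eq_mul,
      add_sub_cancel]
    exact congrArg _ (Finset.sum_congr rfl fun e _ => by rw [bondSpin]; ring)
  have card_spins : (Fintype.card (V → Bool) : ℝ) = 2 ^ Fintype.card V := by
    rw [Fintype.card_fun, Fintype.card_bool, Nat.cast_pow, Nat.cast_ofNat]
  simp_rw [boltzmann_eq, ← Fintype.card_mul_expect, card_spins, ← Finset.mul_expect, evidence]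

/-- The quenched pressure without the entropy `|V| log 2` of free spins, so that sites without
bonds do not contribute. -/
def reducedPressure (x : ℝ) (E : Finset (V × V)) : ℝ :=
  EApressure E x - Fintype.card V * Real.log 2

theorem reducedPressure_eq (x : ℝ) (E : Finset (V × V)) :
    reducedPressure x E = E.card * (x ^ 2 / 2) + meanLogEvidence x E := by
  have growth := hasLinearLogGrowth_evidence x E
  have restrict := measure_pi_map_comp_injective (fun _ : V × V => gaussianReal x 1)
    (Subtype.val_injective (p := (· ∈ E)))
  rw [reducedPressure, EApressure, ← restrict,
    integral_map (Measurable.aemeasurable (by fun_prop))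
      (Measurable.aestronglyMeasurable (by fun_prop))]
  have log_eq (j : V × V → ℝ) : Real.log (2 ^ Fintype.card V *
      (Real.exp (E.card * (x ^ 2 / 2)) * evidence x E j)) =
      Fintype.card V * Real.log 2 + E.card * (x ^ 2 / 2) + Real.log (evidence x E j) := by
    have := growth.pos j
    rw [Real.log_mul (by positivity) (by positivity), Real.log_mul (by positivity) this.ne',
      Real.log_pow, Real.log_exp, add_assoc]
  simp_rw [partition_eq_evidence, log_eq]
  rw [← gaussianCouplings, integral_add (integrable_const _) (growth.integrable_log _),
    integral_const, probReal_univ, one_smul, meanLogEvidence]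
  ring

theorem reducedPressure_mono (hEF : E ⊆ F) : reducedPressure x E ≤ reducedPressure x F := by
  rw [reducedPressure_eq, reducedPressure_eq]
  have := meanLogEvidence_mono (x := x) hEF
  gcongr

theorem reducedPressure_supermodular (x : ℝ) (E F : Finset (V × V)) :
    reducedPressure x E + reducedPressure x F ≤
      reducedPressure x (E ∪ F) + reducedPressure x (E ∩ F) := by
  have hcard : ((E ∪ F).card : ℝ) + (E ∩ F).card = E.card + F.card := by
    exact_mod_cast Finset.card_union_add_card_inter E F
  simp only [reducedPressure_eq]
  linear_combination meanLogEvidence_supermodular x E F - x ^ 2 / 2 * hcard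

theorem reducedPressure_union_of_separated {A : Finset V} (hE : ∀ e ∈ E, e.1 ∈ A ∧ e.2 ∈ A)
    (hF : ∀ e ∈ F, e.1 ∉ A ∧ e.2 ∉ A) :
    reducedPressure x (E ∪ F) = reducedPressure x E + reducedPressure x F := by
  have hdisj : Disjoint E F := Finset.disjoint_left.2 fun e he hf => (hF e hf).1 (hE e he).1
  have evidence_union (j : V × V → ℝ) :
      evidence x (E ∪ F) j = evidence x E j * evidence x F j := by
    simp only [evidence, likelihood_union hdisj]
    exact expect_mul_of_dependsOn_compl (dependsOn_likelihood_spins x j hE)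
      (dependsOn_likelihood_spins x j fun e he => by simpa using hF e he)
  have growth := hasLinearLogGrowth_evidence (V := V) x
  have meanLogEvidence_union :
      meanLogEvidence x (E ∪ F) = meanLogEvidence x E + meanLogEvidence x F := by
    simp only [meanLogEvidence, evidence_union,
      fun j => Real.log_mul ((growth E).pos j).ne' ((growth F).pos j).ne']
    exact integral_add ((growth E).integrable_log _) ((growth F).integrable_log _)
  simp only [reducedPressure_eq, meanLogEvidence_union, Finset.card_union_of_disjoint hdisj,
    Nat.cast_add]
  ring

theorem log_evidence_union_le (hEF : Disjoint E F) (j : V × V → ℝ) :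
    Real.log (evidence x (E ∪ F) j) ≤
      Real.log (evidence x E j) + (|x| * ∑ e ∈ F, |j e| - F.card * (x ^ 2 / 2)) := by
  have pos (A : Finset (V × V)) := (hasLinearLogGrowth_evidence x A).pos j
  have term_le (S : V → Bool) (e : V × V) : x * bondSpin S e * j e ≤ |x| * |j e| :=
    calc x * bondSpin S e * j e ≤ |x * bondSpin S e * j e| := le_abs_self _
      _ = |x| * |j e| := by
        rw [abs_mul, abs_mul, abs_bondSpin, mul_one]
  have likelihood_le (S : V → Bool) :
      likelihood x F S j ≤ Real.exp (|x| * ∑ e ∈ F, |j e| - F.card * (x ^ 2 / 2)) := by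
    rw [likelihood, ← Real.exp_sum, Real.exp_le_exp, Finset.sum_sub_distrib, Finset.sum_const,
      nsmul_eq_mul, Finset.mul_sum]
    exact sub_le_sub_right (Finset.sum_le_sum fun e _ => term_le S e) _
  rw [← Real.log_exp (|x| * _ - _), ← Real.log_mul (pos E).ne' (Real.exp_pos _).ne']
  refine Real.log_le_log (pos _) ?_
  rw [evidence, evidence, Finset.expect_mul]
  refine Finset.expect_le_expect fun S _ => ?_
  rw [likelihood_union hEF]
  exact mul_le_mul_of_nonneg_left (likelihood_le S) ((hasLinearLogGrowth_likelihood x E S).pos j).le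

/-- An upper bound for the pressure contributed by a single bond. -/
def bondCost (x : ℝ) : ℝ := |x| * ∫ y, |y| ∂gaussianReal x 1

theorem bondCost_nonneg (x : ℝ) : 0 ≤ bondCost x :=
  mul_nonneg (abs_nonneg x) (integral_nonneg fun _ => abs_nonneg _)

theorem reducedPressure_union_le (hEF : Disjoint E F) :
    reducedPressure x (E ∪ F) ≤ reducedPressure x E + F.card * bondCost x := by
  have int_log (A : Finset (V × V)) :=
    (hasLinearLogGrowth_evidence x A).integrable_log fun _ => x
  have int_sum : Integrable (fun j : V × V → ℝ => |x| * ∑ e ∈ F, |j e|)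
      (gaussianCouplings fun _ => x) :=
    (integrable_finsetSum F fun e _ => integrable_abs_coupling _ e).const_mul _
  have integrated := integral_mono (int_log (E ∪ F))
    ((int_log E).add (int_sum.sub (integrable_const (F.card * (x ^ 2 / 2)))))
    (log_evidence_union_le hEF)
  simp only [Pi.add_apply, Pi.sub_apply] at integrated
  rw [integral_add (int_log E) (by exact int_sum.sub (integrable_const _)),
    integral_sub int_sum (integrable_const _), integral_const_mul,
    integral_finsetSum F fun e _ => integrable_abs_coupling _ e, integral_const, probReal_univ,
    one_smul] at integrated
  simp only [integral_abs_coupling, Finset.sum_const, nsmul_eq_mul] at integrated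
  simp only [reducedPressure_eq, Finset.card_union_of_disjoint hEF, Nat.cast_add]
  unfold meanLogEvidence bondCost
  linarith

theorem reducedPressure_map (φ : V ↪ W) (x : ℝ) (E : Finset (V × V)) :
    reducedPressure x (E.map (φ.prodMap φ)) = reducedPressure x E := by
  have evidence_map (j : W × W → ℝ) : evidence x (E.map (φ.prodMap φ)) j =
      evidence x E fun e => j (φ.prodMap φ e) := by
    simp only [evidence, likelihood, Finset.prod_map]
    exact expect_comp_embedding φ fun S => likelihood x E S fun e => j (φ.prodMap φ e)
  have meanLogEvidence_map :
      meanLogEvidence x (E.map (φ.prodMap φ)) = meanLogEvidence x E := by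
    have restrict := measure_pi_map_comp_injective (fun _ : W × W => gaussianReal x 1)
      (φ.prodMap φ).injective
    simp only [meanLogEvidence, evidence_map, gaussianCouplings]
    rw [← restrict, integral_map (Measurable.aemeasurable (by fun_prop))
      (hasLinearLogGrowth_evidence x E).measurable.log.aestronglyMeasurable]
  rw [reducedPressure_eq, reducedPressure_eq, meanLogEvidence_map, Finset.card_map]

end ReducedPressure

section BondPressure

variable {α β : Type*} {x : ℝ} {E F : Finset (α × α)}

theorem reducedPressure_eq_of_map_eq {V W : Type*} [Fintype V] [DecidableEq V] [Fintype W]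
    [DecidableEq W] {φ : V ↪ α} {ψ : W ↪ α} {E : Finset (V × V)} {F : Finset (W × W)}
    (h : E.map (φ.prodMap φ) = F.map (ψ.prodMap ψ)) :
    reducedPressure x E = reducedPressure x F := by
  classical
  let U : Finset α := Finset.univ.map φ ∪ Finset.univ.map ψ
  let φU : V ↪ U := φ.codRestrict U fun v => by simp [U]
  let ψU : W ↪ U := ψ.codRestrict U fun w => by simp [U]
  have map_eq : E.map (φU.prodMap φU) = F.map (ψU.prodMap ψU) := by
    refine Finset.map_injective ((Function.Embedding.subtype (· ∈ U)).prodMap (.subtype _)) ?_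
    rw [Finset.map_map, Finset.map_map]
    exact h
  rw [← reducedPressure_map φU, map_eq, reducedPressure_map]

/-- The sites touched by the bonds of `E`. -/
def bondSites [DecidableEq α] (E : Finset (α × α)) : Finset α := E.image Prod.fst ∪ E.image Prod.snd

/-- The bonds of `E` between sites of `W`, regarded as bonds of the finite type `W`. -/
def restrictBonds [DecidableEq α] (W : Finset α) (E : Finset (α × α)) : Finset (W × W) :=
  Finset.univ.filter fun e => ((e.1 : α), (e.2 : α)) ∈ E

theorem map_restrictBonds [DecidableEq α] {W : Finset α} (hE : bondSites E ⊆ W) :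
    (restrictBonds W E).map
      ((Function.Embedding.subtype (· ∈ W)).prodMap (.subtype (· ∈ W))) = E := by
  ext ⟨a, b⟩
  constructor
  · intro hab
    obtain ⟨e, he, hab⟩ := Finset.mem_map.1 hab
    exact hab ▸ (Finset.mem_filter.1 he).2
  · intro he
    have ha : a ∈ W := hE (Finset.mem_union_left _ (Finset.mem_image_of_mem Prod.fst he))
    have hb : b ∈ W := hE (Finset.mem_union_right _ (Finset.mem_image_of_mem Prod.snd he))
    exact Finset.mem_map.2 ⟨(⟨a, ha⟩, ⟨b, hb⟩), by simpa [restrictBonds] using he, rfl⟩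

theorem exists_map_subtype_eq (E F : Finset (α × α)) :
    ∃ (W : Finset α) (E' F' : Finset (W × W)),
      E = E'.map ((Function.Embedding.subtype (· ∈ W)).prodMap (.subtype (· ∈ W))) ∧
      F = F'.map ((Function.Embedding.subtype (· ∈ W)).prodMap (.subtype (· ∈ W))) := by
  classical
  exact ⟨bondSites E ∪ bondSites F, _, _,
    (map_restrictBonds Finset.subset_union_left).symm,
    (map_restrictBonds Finset.subset_union_right).symm⟩

variable [DecidableEq α] [DecidableEq β]

/-- The reduced pressure of a finite set of bonds between sites of an arbitrary type. -/
def bondPressure (x : ℝ) (E : Finset (α × α)) : ℝ :=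
  reducedPressure x (restrictBonds (bondSites E) E)

theorem bondPressure_map_fintype {V : Type*} [Fintype V] [DecidableEq V] (φ : V ↪ α)
    (E : Finset (V × V)) : bondPressure x (E.map (φ.prodMap φ)) = reducedPressure x E :=
  reducedPressure_eq_of_map_eq (map_restrictBonds (Finset.Subset.refl _))

theorem bondPressure_map (φ : α ↪ β) (E : Finset (α × α)) :
    bondPressure x (E.map (φ.prodMap φ)) = bondPressure x E := by
  obtain ⟨W, E', -, rfl, -⟩ := exists_map_subtype_eq E E
  rw [Finset.map_map]
  exact (bondPressure_map_fintype ((Function.Embedding.subtype (· ∈ W)).trans φ) E').trans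
    (bondPressure_map_fintype _ E').symm

theorem bondPressure_mono (hEF : E ⊆ F) : bondPressure x E ≤ bondPressure x F := by
  obtain ⟨W, E', F', rfl, rfl⟩ := exists_map_subtype_eq E F
  rw [bondPressure_map_fintype, bondPressure_map_fintype]
  exact reducedPressure_mono (Finset.map_subset_map.1 hEF)

theorem bondPressure_supermodular (x : ℝ) (E F : Finset (α × α)) :
    bondPressure x E + bondPressure x F ≤ bondPressure x (E ∪ F) + bondPressure x (E ∩ F) := by
  obtain ⟨W, E', F', rfl, rfl⟩ := exists_map_subtype_eq E F
  rw [← Finset.map_union, ← Finset.map_inter]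
  simp only [bondPressure_map_fintype]
  exact reducedPressure_supermodular x E' F'

theorem bondPressure_union_le (hEF : Disjoint E F) :
    bondPressure x (E ∪ F) ≤ bondPressure x E + F.card * bondCost x := by
  obtain ⟨W, E', F', rfl, rfl⟩ := exists_map_subtype_eq E F
  rw [← Finset.map_union, bondPressure_map_fintype, bondPressure_map_fintype, Finset.card_map]
  exact reducedPressure_union_le ((Finset.disjoint_map _).1 hEF)

theorem bondPressure_union_of_separated {A : Finset α} (hE : ∀ e ∈ E, e.1 ∈ A ∧ e.2 ∈ A)
    (hF : ∀ e ∈ F, e.1 ∉ A ∧ e.2 ∉ A) :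
    bondPressure x (E ∪ F) = bondPressure x E + bondPressure x F := by
  obtain ⟨W, E', F', rfl, rfl⟩ := exists_map_subtype_eq E F
  rw [← Finset.map_union]
  simp only [bondPressure_map_fintype]
  refine reducedPressure_union_of_separated (A := A.subtype (· ∈ W)) (fun e he => ?_)
    fun e he => ?_
  · simp only [Finset.mem_subtype]
    exact hE _ (Finset.mem_map_of_mem _ he)
  · simp only [Finset.mem_subtype]
    exact hF _ (Finset.mem_map_of_mem _ he)

theorem bondPressure_biUnion {τ : Type*} {T : Finset τ} {W : τ → Finset α}
    {E : τ → Finset (α × α)} (hW : (T : Set τ).PairwiseDisjoint W)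
    (hE : ∀ t ∈ T, ∀ e ∈ E t, e.1 ∈ W t ∧ e.2 ∈ W t) :
    bondPressure x (T.biUnion E) = ∑ t ∈ T, bondPressure x (E t) := by
  classical
  induction T using Finset.induction_on with
  | empty =>
    have empty_add_empty := bondPressure_union_of_separated (x := x) (E := (∅ : Finset (α × α)))
      (F := ∅) (A := ∅) (by simp) (by simp)
    simpa using empty_add_empty
  | insert t T ht ih =>
    rw [Finset.coe_insert] at hW
    have hE' (t') (ht' : t' ∈ T) := hE t' (Finset.mem_insert_of_mem ht')
    rw [Finset.biUnion_insert, Finset.sum_insert ht,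
      ← ih (hW.subset (Set.subset_insert _ _)) hE']
    refine bondPressure_union_of_separated (hE t (Finset.mem_insert_self t T)) fun e he => ?_
    obtain ⟨t', ht', he'⟩ := Finset.mem_biUnion.1 he
    have hdisj := Finset.disjoint_right.1 (hW (Set.mem_insert _ _) (Set.mem_insert_of_mem _ ht')
      (ne_of_mem_of_not_mem ht' ht).symm)
    exact ⟨hdisj (hE' t' ht' e he').1, hdisj (hE' t' ht' e he').2⟩

end BondPressure

section AdjacencyGain

variable {α β τ : Type*} {r : α → α → Prop} [DecidableRel r] {s : β → β → Prop} [DecidableRel s]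
  {p : α → Prop} [DecidablePred p] {x : ℝ} {U W : Finset α}

/-- The bonds of the graph `r` with both endpoints in `W`. -/
def inducedBonds (r : α → α → Prop) [DecidableRel r] (W : Finset α) : Finset (α × α) :=
  (W ×ˢ W).filter fun e => r e.1 e.2

/-- The bonds of `W` that do not cross the cut `{p, ¬p}`. -/
def uncutBonds (r : α → α → Prop) [DecidableRel r] (p : α → Prop) [DecidablePred p]
    (W : Finset α) : Finset (α × α) :=
  (inducedBonds r W).filter fun e => p e.1 ↔ p e.2

/-- The bonds of `W` that cross the cut `{p, ¬p}`. -/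
def cutBonds (r : α → α → Prop) [DecidableRel r] (p : α → Prop) [DecidablePred p]
    (W : Finset α) : Finset (α × α) :=
  (inducedBonds r W).filter fun e => ¬(p e.1 ↔ p e.2)

theorem mem_of_mem_inducedBonds {e : α × α} (he : e ∈ inducedBonds r W) : e.1 ∈ W ∧ e.2 ∈ W :=
  Finset.mem_product.1 (Finset.mem_filter.1 he).1

theorem inducedBonds_map {φ : α ↪ β} (hφ : ∀ a b, s (φ a) (φ b) ↔ r a b) (W : Finset α) :
    inducedBonds s (W.map φ) = (inducedBonds r W).map (φ.prodMap φ) := by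
  rw [inducedBonds, ← Finset.prodMap_map_product, Finset.filter_map]
  exact congrArg _ (Finset.filter_congr fun e _ => hφ e.1 e.2)

variable [DecidableEq α] [DecidableEq β]

/-- The reduced pressure of the subgraph of `r` induced on `W`. -/
def sitePressure (x : ℝ) (r : α → α → Prop) [DecidableRel r] (W : Finset α) : ℝ :=
  bondPressure x (inducedBonds r W)

/-- The pressure gained by joining the two sides `{p, ¬p}` of `W`. -/
def adjacencyGain (x : ℝ) (r : α → α → Prop) [DecidableRel r] (p : α → Prop) [DecidablePred p]
    (W : Finset α) : ℝ :=
  sitePressure x r W - sitePressure x r (W.filter p) - sitePressure x r (W.filter (¬p ·))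

theorem sitePressure_map {φ : α ↪ β} (hφ : ∀ a b, s (φ a) (φ b) ↔ r a b) (W : Finset α) :
    sitePressure x s (W.map φ) = sitePressure x r W := by
  rw [sitePressure, inducedBonds_map hφ, bondPressure_map, sitePressure]

theorem bondPressure_uncutBonds : bondPressure x (uncutBonds r p W) =
    sitePressure x r (W.filter p) + sitePressure x r (W.filter (¬p ·)) := by
  have uncut_eq : uncutBonds r p W =
      inducedBonds r (W.filter p) ∪ inducedBonds r (W.filter (¬p ·)) := by
    ext e
    simp only [uncutBonds, inducedBonds, Finset.mem_union, Finset.mem_filter, Finset.mem_product]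
    tauto
  rw [uncut_eq]
  exact bondPressure_union_of_separated (fun _ => mem_of_mem_inducedBonds) fun e he => by
    have := mem_of_mem_inducedBonds he
    simp only [Finset.mem_filter] at this ⊢
    tauto

theorem adjacencyGain_eq : adjacencyGain x r p W =
    bondPressure x (inducedBonds r W) - bondPressure x (uncutBonds r p W) := by
  rw [bondPressure_uncutBonds, adjacencyGain, sitePressure, sub_sub]

theorem adjacencyGain_le : adjacencyGain x r p W ≤ (cutBonds r p W).card * bondCost x := by
  have union_eq : uncutBonds r p W ∪ cutBonds r p W = inducedBonds r W :=
    Finset.filter_union_filter_not_eq _ _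
  have hdisj : Disjoint (uncutBonds r p W) (cutBonds r p W) :=
    Finset.disjoint_filter_filter_not _ _ _
  rw [adjacencyGain_eq, ← union_eq]
  exact sub_le_iff_le_add'.2 (bondPressure_union_le hdisj)

theorem sum_adjacencyGain_le {T : Finset τ} {W : τ → Finset α}
    (hW : (T : Set τ).PairwiseDisjoint W) (hU : ∀ t ∈ T, W t ⊆ U) :
    ∑ t ∈ T, adjacencyGain x r p (W t) ≤ adjacencyGain x r p U := by
  have inter_eq : uncutBonds r p U ∩ T.biUnion (fun t => inducedBonds r (W t)) =
      T.biUnion fun t => uncutBonds r p (W t) := by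
    ext e
    simp only [uncutBonds, inducedBonds, Finset.mem_inter, Finset.mem_biUnion, Finset.mem_filter,
      Finset.mem_product]
    constructor
    · rintro ⟨⟨-, he⟩, t, ht, hmem⟩
      exact ⟨t, ht, hmem, he⟩
    · rintro ⟨t, ht, hmem, he⟩
      exact ⟨⟨⟨⟨hU t ht hmem.1.1, hU t ht hmem.1.2⟩, hmem.2⟩, he⟩, t, ht, hmem⟩
  have union_subset :
      uncutBonds r p U ∪ T.biUnion (fun t => inducedBonds r (W t)) ⊆ inducedBonds r U := by
    refine Finset.union_subset (Finset.filter_subset _ _) (Finset.biUnion_subset.2 fun t ht => ?_)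
    exact Finset.filter_subset_filter _ (Finset.product_subset_product (hU t ht) (hU t ht))
  have supermodular := bondPressure_supermodular x (uncutBonds r p U)
    (T.biUnion fun t => inducedBonds r (W t))
  rw [inter_eq, bondPressure_biUnion hW fun t _ _ => mem_of_mem_inducedBonds,
    bondPressure_biUnion (E := fun t => uncutBonds r p (W t)) hW fun t _ _ he =>
      mem_of_mem_inducedBonds (Finset.filter_subset _ _ he)] at supermodular
  simp only [adjacencyGain_eq, Finset.sum_sub_distrib]
  linarith [bondPressure_mono (x := x) union_subset]

end AdjacencyGain

section LatticeBoxes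

variable {ι : Type*}

/-- The oriented nearest-neighbour relation of the lattice `ι → ℤ`. -/
def IsLatticeBond [DecidableEq ι] (v w : ι → ℤ) : Prop := ∃ i, w = v + Pi.single i 1

theorem isLatticeBond_iff [DecidableEq ι] {v w : ι → ℤ} :
    IsLatticeBond v w ↔ ∃ i, (∀ k, k ≠ i → w k = v k) ∧ w i = v i + 1 := by
  refine exists_congr fun i => ?_
  rw [funext_iff]
  constructor
  · intro h
    exact ⟨fun k hk => by simp [h k, hk], by simp [h i]⟩
  · rintro ⟨hne, hi⟩ k
    obtain rfl | hk := eq_or_ne k i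
    · simp [hi]
    · simp [hne k hk, hk]

variable [Fintype ι] [DecidableEq ι] {x : ℝ} {i : ι} {a v : ι → ℤ} {m n : ι → ℕ}

instance : DecidableRel (IsLatticeBond (ι := ι)) := fun v w =>
  inferInstanceAs (Decidable (∃ i, w = v + Pi.single i 1))

/-- The lattice box with lowest corner `a` and side lengths `n`. -/
def box (a : ι → ℤ) (n : ι → ℕ) : Finset (ι → ℤ) :=
  Fintype.piFinset fun k => Finset.Ico (a k) (a k + n k)

theorem mem_box : v ∈ box a n ↔ ∀ k, a k ≤ v k ∧ v k < a k + n k := by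
  simp only [box, Fintype.mem_piFinset, Finset.mem_Ico]

theorem card_box (a : ι → ℤ) (n : ι → ℕ) : (box a n).card = ∏ k, n k := by
  simp [box]

theorem card_box_update_one (a : ι → ℤ) (i : ι) (n : ι → ℕ) :
    (box a (Function.update n i 1)).card = ∏ k ∈ {i}ᶜ, n k := by
  rw [card_box, Finset.prod_update_of_mem (Finset.mem_univ i), one_mul,
    ← Finset.compl_eq_univ_sdiff]

theorem map_addLeftEmbedding_box (a b : ι → ℤ) (n : ι → ℕ) :
    (box b n).map (addLeftEmbedding a) = box (a + b) n := by
  ext v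
  simp only [Finset.mem_map, addLeftEmbedding_apply, mem_box, Pi.add_apply]
  constructor
  · rintro ⟨u, hu, rfl⟩ k
    simpa [add_assoc] using hu k
  · intro hv
    refine ⟨v - a, fun k => ?_, add_sub_cancel a v⟩
    have := hv k
    rw [Pi.sub_apply]
    omega

/-- The reduced pressure of the nearest-neighbour model on a box with side lengths `n`. -/
def boxPressure (x : ℝ) (n : ι → ℕ) : ℝ := sitePressure x IsLatticeBond (box 0 n)

theorem sitePressure_box (x : ℝ) (a : ι → ℤ) (n : ι → ℕ) :
    sitePressure x IsLatticeBond (box a n) = boxPressure x n := by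
  rw [← add_zero a, ← map_addLeftEmbedding_box]
  exact sitePressure_map (fun v w => by simp [IsLatticeBond, add_assoc]) _

/-- The pressure gained by joining two boxes of side lengths `n` along a face orthogonal to the
direction `i`. -/
def doublingGain (x : ℝ) (i : ι) (n : ι → ℕ) : ℝ :=
  boxPressure x (Function.update n i (2 * n i)) - 2 * boxPressure x n

theorem adjacencyGain_box (ha : a i = -n i) :
    adjacencyGain x IsLatticeBond (· i < 0) (box a (Function.update n i (2 * n i))) =
      doublingGain x i n := by
  have filter_neg : (box a (Function.update n i (2 * n i))).filter (· i < 0) = box a n := by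
    ext v
    simp only [Finset.mem_filter, mem_box, Function.update_apply]
    grind
  have filter_nonneg : (box a (Function.update n i (2 * n i))).filter (¬ · i < 0) =
      box (Function.update a i 0) n := by
    ext v
    simp only [Finset.mem_filter, mem_box, Function.update_apply]
    grind
  simp only [adjacencyGain, filter_neg, filter_nonneg, sitePressure_box, doublingGain]
  ring

theorem eq_of_mem_cutBonds {W : Finset (ι → ℤ)} {e : (ι → ℤ) × (ι → ℤ)}
    (he : e ∈ cutBonds IsLatticeBond (· i < 0) W) :
    e.1 i = -1 ∧ e.2 = e.1 + Pi.single i 1 := by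
  obtain ⟨hbond, hcut⟩ := Finset.mem_filter.1 he
  obtain ⟨k, hk⟩ := (Finset.mem_filter.1 hbond).2
  rw [hk] at hcut
  by_cases hki : i = k
  · subst hki
    refine ⟨?_, hk⟩
    simp only [Pi.add_apply, Pi.single_eq_same] at hcut
    omega
  · simp [hki] at hcut

theorem card_cutBonds_box_le (i : ι) (a : ι → ℤ) (n : ι → ℕ) :
    (cutBonds IsLatticeBond (· i < 0) (box a n)).card ≤ ∏ k ∈ {i}ᶜ, n k := by
  rw [← card_box_update_one (Function.update a i (-1)) i n]
  refine Finset.card_le_card_of_injOn Prod.fst (fun e he => ?_) fun e he e' he' hfst => ?_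
  · have hmem := (mem_of_mem_inducedBonds (Finset.filter_subset _ _ he)).1
    have hi := (eq_of_mem_cutBonds he).1
    simp only [Finset.mem_coe, mem_box, Function.update_apply] at hmem ⊢
    grind
  · rw [Prod.ext_iff, (eq_of_mem_cutBonds he).2, (eq_of_mem_cutBonds he').2, hfst]
    exact ⟨rfl, rfl⟩

theorem doublingGain_le (x : ℝ) (i : ι) (n : ι → ℕ) :
    doublingGain x i n ≤ (∏ k ∈ {i}ᶜ, (n k : ℝ)) * bondCost x := by
  have ha : Function.update (0 : ι → ℤ) i (-n i) i = -n i := Function.update_self ..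
  have hcard := card_cutBonds_box_le i (Function.update (0 : ι → ℤ) i (-n i))
    (Function.update n i (2 * n i))
  rw [Finset.prod_update_of_notMem (by simp)] at hcard
  rw [← adjacencyGain_box ha]
  refine adjacencyGain_le.trans (mul_le_mul_of_nonneg_right ?_ (bondCost_nonneg x))
  exact_mod_cast hcard

/-- The box of sides `m`, doubled in the direction `i` and centred there at the hyperplane
`v i = 0`, at the position `t` of the grid with spacings `m` in the other directions. -/
def seamTile (i : ι) (m : ι → ℕ) (t : ι → ℤ) : Finset (ι → ℤ) :=
  box (Function.update (fun k => t k * m k) i (-m i)) (Function.update m i (2 * m i))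

theorem adjacencyGain_seamTile (x : ℝ) (i : ι) (m : ι → ℕ) (t : ι → ℤ) :
    adjacencyGain x IsLatticeBond (· i < 0) (seamTile i m t) = doublingGain x i m :=
  adjacencyGain_box (Function.update_self ..)

theorem mem_seamTile {t : ι → ℤ} : v ∈ seamTile i m t ↔
    (-m i ≤ v i ∧ v i < m i) ∧ ∀ k ≠ i, t k * m k ≤ v k ∧ v k < t k * m k + m k := by
  simp only [seamTile, mem_box, Function.update_apply]
  grind

theorem seamTile_subset {t : ι → ℤ} (hi : m i ≤ n i)
    (ht : t ∈ box 0 (Function.update (fun k => n k / m k) i 1)) :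
    seamTile i m t ⊆ seamTile i n 0 := by
  intro v hv
  rw [mem_seamTile] at hv ⊢
  refine ⟨⟨by omega, by omega⟩, fun k hk => ?_⟩
  have htk := mem_box.1 ht k
  rw [Function.update_of_ne hk, Pi.zero_apply, zero_add] at htk
  have nonneg : 0 ≤ t k * m k := mul_nonneg htk.1 (Nat.cast_nonneg _)
  have le_side : (t k + 1) * m k ≤ n k :=
    (mul_le_mul_of_nonneg_right htk.2 (Nat.cast_nonneg _)).trans
      (by exact_mod_cast Nat.div_mul_le_self (n k) (m k))
  have := hv.2 k hk
  rw [add_one_mul] at le_side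
  rw [Pi.zero_apply, zero_mul]
  omega

theorem pairwiseDisjoint_seamTile (i : ι) (m n : ι → ℕ) :
    (box 0 (Function.update n i 1) : Set (ι → ℤ)).PairwiseDisjoint (seamTile i m) := by
  intro s hs t ht hst
  refine Finset.disjoint_left.2 fun v hvs hvt => hst (funext fun k => ?_)
  by_cases hk : k = i
  · have hsk := mem_box.1 hs k
    have htk := mem_box.1 ht k
    rw [hk, Function.update_self, Pi.zero_apply] at hsk htk
    rw [hk]
    omega
  · have hsk := (mem_seamTile.1 hvs).2 k hk
    have htk := (mem_seamTile.1 hvt).2 k hk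
    rw [← add_one_mul] at hsk htk
    have := lt_of_mul_lt_mul_right (hsk.1.trans_lt htk.2) (Nat.cast_nonneg _)
    have := lt_of_mul_lt_mul_right (htk.1.trans_lt hsk.2) (Nat.cast_nonneg _)
    omega

theorem prod_mul_doublingGain_le (x : ℝ) (hi : m i ≤ n i) :
    (∏ k ∈ {i}ᶜ, ((n k / m k : ℕ) : ℝ)) * doublingGain x i m ≤ doublingGain x i n := by
  have sum_le := sum_adjacencyGain_le (x := x) (r := IsLatticeBond) (p := (· i < 0))
    (pairwiseDisjoint_seamTile i m fun k => n k / m k) fun t => seamTile_subset hi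
  simp only [adjacencyGain_seamTile, Finset.sum_const, card_box_update_one, nsmul_eq_mul,
    Nat.cast_prod] at sum_le
  exact sum_le

end LatticeBoxes

section MultidimensionalFekete

variable {ι : Type*}

theorem tendsto_mul_natDiv_div_atTop (m n : ℕ) :
    Tendsto (fun L : ℕ => ((m * L / n : ℕ) : ℝ) / L) atTop (nhds (m / n)) := by
  have floor_limit := (tendsto_nat_floor_mul_div_atTop (R := ℝ) (a := (m : ℝ) / n)
    (by positivity)).comp tendsto_natCast_atTop_atTop
  refine floor_limit.congr fun L => ?_
  rw [Function.comp_apply, div_mul_eq_mul_div, ← Nat.cast_mul, Nat.floor_div_eq_div]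

/-- A multidimensional Fekete lemma: the limit is `∏ k ∈ s, m k` times the supremum of the densities
`g n / ∏ k ∈ s, n k`. -/
theorem exists_tendsto_div_pow_of_superadditive [Finite ι] {s : Finset ι} {g : (ι → ℕ) → ℝ}
    {C : ℝ} (hbound : ∀ n, g n ≤ (∏ k ∈ s, (n k : ℝ)) * C)
    (hsuper : ∀ m n, m ≤ n → (∏ k ∈ s, ((n k / m k : ℕ) : ℝ)) * g m ≤ g n)
    {m : ι → ℕ} (hm : ∀ k, 0 < m k) :
    ∃ c : ℝ, Tendsto (fun L : ℕ => g (fun k => m k * L) / (L : ℝ) ^ s.card) atTop (nhds c) := by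
  let vol (n : ι → ℕ) : ℝ := ∏ k ∈ s, (n k : ℝ)
  have vol_pos {n : ι → ℕ} (hn : ∀ k, 0 < n k) : 0 < vol n :=
    Finset.prod_pos fun k _ => Nat.cast_pos.2 (hn k)
  have vol_scale (L : ℕ) : vol (fun k => m k * L) = vol m * (L : ℝ) ^ s.card := by
    simp only [vol, Nat.cast_mul, Finset.prod_mul_distrib, Finset.prod_const]
  let density (n : {n : ι → ℕ // ∀ k, 0 < n k}) : ℝ := g n / vol n
  have : Nonempty {n : ι → ℕ // ∀ k, 0 < n k} := ⟨⟨m, hm⟩⟩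
  have density_bdd : BddAbove (Set.range density) := by
    refine ⟨C, Set.forall_mem_range.2 fun n => ?_⟩
    exact (div_le_iff₀' (vol_pos n.2)).2 (hbound n)
  refine ⟨(⨆ n, density n) * vol m, tendsto_order.2 ⟨fun b hb => ?_, fun b hb => ?_⟩⟩
  · obtain ⟨n, hn⟩ := exists_lt_of_lt_ciSup ((div_lt_iff₀ (vol_pos hm)).2 hb)
    have tiling_limit : Tendsto (fun L : ℕ =>
        (∏ k ∈ s, (((m k * L / n.1 k : ℕ) : ℝ) / L)) * g n) atTop
        (nhds ((∏ k ∈ s, ((m k : ℝ) / n.1 k)) * g n)) :=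
      (tendsto_finsetProd s fun k _ => tendsto_mul_natDiv_div_atTop (m k) (n.1 k)).mul_const _
    have lt_limit : b < (∏ k ∈ s, ((m k : ℝ) / n.1 k)) * g n := by
      rw [Finset.prod_div_distrib, div_mul_eq_mul_div, mul_div_assoc, mul_comm]
      exact (div_lt_iff₀ (vol_pos hm)).1 hn
    filter_upwards [tiling_limit.eventually (lt_mem_nhds lt_limit),
      eventually_all.2 fun k => eventually_ge_atTop (n.1 k)] with L hL hnL
    refine hL.trans_le ?_
    rw [Finset.prod_div_distrib, Finset.prod_const, div_mul_eq_mul_div]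
    gcongr
    exact hsuper n _ fun k => (hnL k).trans (Nat.le_mul_of_pos_left L (hm k))
  · filter_upwards [eventually_gt_atTop 0] with L hL
    have hmL (k) : 0 < m k * L := Nat.mul_pos (hm k) hL
    refine lt_of_le_of_lt ?_ hb
    rw [div_le_iff₀ (by positivity), mul_assoc, ← vol_scale, ← div_le_iff₀ (vol_pos hmL)]
    exact le_ciSup density_bdd ⟨_, hmL⟩

end MultidimensionalFekete

section CubeDoubling

variable {ι : Type*} [Fintype ι] [DecidableEq ι]

theorem exists_tendsto_doublingGain_div_pow (x : ℝ) (i : ι) {m : ι → ℕ} (hm : ∀ k, 0 < m k) :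
    ∃ c : ℝ, Tendsto (fun L : ℕ => doublingGain x i (fun k => m k * L) /
      (L : ℝ) ^ (Fintype.card ι - 1)) atTop (nhds c) := by
  have card_compl : ({i}ᶜ : Finset ι).card = Fintype.card ι - 1 := by
    rw [Finset.card_compl, Finset.card_singleton]
  rw [← card_compl]
  exact exists_tendsto_div_pow_of_superadditive (doublingGain_le x i)
    (fun _ _ hmn => prod_mul_doublingGain_le x (hmn i)) hm

theorem exists_tendsto_boxPressure_sub_div_pow (x : ℝ) (s : Finset ι) :
    ∃ c : ℝ, Tendsto (fun L : ℕ => (boxPressure x (fun k => (if k ∈ s then 2 else 1) * L) -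
      2 ^ s.card * boxPressure x (fun _ : ι => L)) / (L : ℝ) ^ (Fintype.card ι - 1))
      atTop (nhds c) := by
  induction s using Finset.induction_on with
  | empty => exact ⟨0, by simp⟩
  | insert i s hi ih =>
    obtain ⟨c, hc⟩ := ih
    obtain ⟨c', hc'⟩ := exists_tendsto_doublingGain_div_pow x i
      (m := fun k => if k ∈ s then 2 else 1) fun k => by split_ifs <;> norm_num
    refine ⟨c' + 2 * c, (hc'.add (hc.const_mul 2)).congr fun L => ?_⟩
    have sides_insert : (fun k => (if k ∈ insert i s then 2 else 1) * L) =
        Function.update (fun k => (if k ∈ s then 2 else 1) * L) i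
          (2 * ((if i ∈ s then 2 else 1) * L)) := by
      ext k
      by_cases hk : k = i
      · simp [hk, hi]
      · simp [hk]
    rw [sides_insert, Finset.card_insert_of_notMem hi, doublingGain]
    ring

theorem boxPressure_cube (x : ℝ) (d L : ℕ) :
    boxPressure x (fun _ : Fin d => L) = reducedPressure x (cubeBonds d L) := by
  let φ : (Fin d → Fin L) ↪ (Fin d → ℤ) :=
    (Fin.valEmbedding.trans Nat.castEmbedding).arrowCongrRight
  have box_eq : box 0 (fun _ : Fin d => L) = Finset.univ.map φ := by
    ext v
    simp only [mem_box, Finset.mem_map, Finset.mem_univ, true_and, Pi.zero_apply, zero_add]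
    constructor
    · intro hv
      refine ⟨fun k => ⟨(v k).toNat, by have := hv k; omega⟩, funext fun k => ?_⟩
      exact Int.toNat_of_nonneg (hv k).1
    · rintro ⟨u, rfl⟩ k
      exact ⟨Int.natCast_nonneg _, Int.ofNat_lt.2 (u k).2⟩
  have isLatticeBond_φ_iff (u w : Fin d → Fin L) : IsLatticeBond (φ u) (φ w) ↔
      ∃ i, (∀ k, k ≠ i → w k = u k) ∧ (w i : ℕ) = (u i : ℕ) + 1 := by
    have φ_eq_iff (k : Fin d) : φ w k = φ u k ↔ w k = u k := Int.ofNat_inj.trans Fin.ext_iff.symm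
    have φ_succ_iff (k : Fin d) : φ w k = φ u k + 1 ↔ (w k : ℕ) = (u k : ℕ) + 1 := Int.ofNat_inj
    simp only [← φ_eq_iff, ← φ_succ_iff, isLatticeBond_iff]
  rw [boxPressure, sitePressure, box_eq, inducedBonds_map isLatticeBond_φ_iff,
    bondPressure_map_fintype]
  rfl

theorem EApressure_cubeBonds (x : ℝ) (d L : ℕ) :
    EApressure (cubeBonds d L) x = (L : ℝ) ^ d * Real.log 2 + boxPressure x fun _ : Fin d => L := by
  rw [boxPressure_cube, reducedPressure]
  simp

end CubeDoubling

/-- **Theorem 1.** Existence of the adjacency surface pressure: for `d ≥ 1`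
and `x > 0`, with `T_L = P_{Λ_{2L}} − 2^d P_{Λ_L}` (free boundary conditions; the `2^d`
composing sub-cubes of side `L` all have pressure `P_{Λ_L}`), the sequence `T_L / L^{d−1}`
converges to a finite limit as `L → ∞`. -/
theorem adjacency_surface_pressure_exists
    (d : ℕ) (hd : 1 ≤ d) (x : ℝ) (hx : 0 < x) :
    ∃ c : ℝ, Tendsto (fun L : ℕ =>
        (EApressure (cubeBonds d (2 * L)) x - 2 ^ d * EApressure (cubeBonds d L) x) /
          (L : ℝ) ^ (d - 1))
      atTop (nhds c) := by
  obtain ⟨c, hc⟩ := exists_tendsto_boxPressure_sub_div_pow x (Finset.univ : Finset (Fin d))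
  simp only [Finset.mem_univ, if_true, Finset.card_univ, Fintype.card_fin] at hc
  refine ⟨c, hc.congr fun L => ?_⟩
  rw [EApressure_cubeBonds, EApressure_cubeBonds, Nat.cast_mul, Nat.cast_ofNat, mul_pow]
  ring

end
end

section
/- Theorem 2 (surface-order bound for the periodic–free pressure difference): fix d ≥ 1, x > 0 and L ∈ ℕ, L ≥ 2. Let P_{Π_L} be the quenched pressure of the d-dimensional discrete torus of side L (all nearest-neighbor bonds with periodic identification, all parameters equal to x) and P_{Λ_L} the quenched pressure of the cube of side L with free boundary conditions. Then (x²/2) d L^{d−1} ≤ P_{Π_L} − P_{Λ_L} ≤ x² d L^{d−1}; in particular the difference is positive and of the order of the surface L^{d−1}. -/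
open MeasureTheory ProbabilityTheory Filter

noncomputable section

/-! On the Nishimori line, flipping the couplings on a bond set `B` along a gauge configuration
multiplies their law by the ratio of the Boltzmann weights of that configuration and of the ground
configuration `1`. Summing over gauge configurations gives, for every observable `f`,
`[(Z_B / w_B) f] = ∑_S [f ∘ flip_S]`, where `w_B` is the weight of the configuration `1`. For
`A ⊆ B` and `C = B ∖ A` this yields `[Z_A / Z_B] = exp (- ∑_C x² / 2)` and
`[Z_B / (Z_A w_C)] = 1`; Jensen's inequality for the logarithm turns the first identity into the
lower bound and the second one, with `[ln w_C] = ∑_C x²`, into the upper bound. For the torus and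
the cube, `C` consists of the bonds leaving the hyperplanes where one coordinate equals `L - 1`. -/

lemma pi_tilted {ι : Type*} [Fintype ι] {X : ι → Type*} [∀ i, MeasurableSpace (X i)]
    (μ : ∀ i, Measure (X i)) [∀ i, SigmaFinite (μ i)] (f : ∀ i, X i → ℝ) :
    (Measure.pi μ).tilted (fun y ↦ ∑ i, f i (y i)) = Measure.pi fun i ↦ (μ i).tilted (f i) := by
  refine (Measure.pi_eq fun s hs ↦ ?_).symm
  have integral_prod (ν : ∀ i, Measure (X i)) [∀ i, SigmaFinite (ν i)] :
      ∫ y, Real.exp (∑ i, f i (y i)) ∂Measure.pi ν = ∏ i, ∫ y, Real.exp (f i y) ∂ν i := by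
    simp_rw [Real.exp_sum]
    exact integral_fintype_prod_eq_prod fun i y ↦ Real.exp (f i y)
  calc (Measure.pi μ).tilted (fun y ↦ ∑ i, f i (y i)) (Set.univ.pi s)
      = ENNReal.ofReal (∏ i, (∫ y in s i, Real.exp (f i y) ∂μ i) /
          ∫ y, Real.exp (f i y) ∂μ i) := by
        rw [tilted_apply_eq_ofReal_integral' _ (.univ_pi hs), integral_div,
          Measure.restrict_pi_pi, integral_prod, integral_prod, Finset.prod_div_distrib]
    _ = ∏ i, (μ i).tilted (f i) (s i) := by
        rw [ENNReal.ofReal_prod_of_nonneg fun i _ ↦ by positivity]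
        refine Finset.prod_congr rfl fun i _ ↦ ?_
        rw [tilted_apply_eq_ofReal_integral' _ (hs i), integral_div]

lemma gaussianReal_tilted_mul (m : ℝ) (v : NNReal) (t : ℝ) :
    (gaussianReal m v).tilted (t * ·) = gaussianReal (m + v * t) v := by
  rcases eq_or_ne v 0 with rfl | hv
  · rw [gaussianReal_zero_var, tilted_congr (ae_eq_dirac (t * ·))]
    exact (tilted_const _ _).trans (by simp)
  have pdf_mul_density (y : ℝ) : gaussianPDF m v y * ENNReal.ofReal
      (Real.exp (t * y) / ∫ z, Real.exp (t * z) ∂gaussianReal m v) =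
      gaussianPDF (m + v * t) v y := by
    have mgf_eq := congrFun (mgf_fun_id_gaussianReal (μ := m) (v := v)) t
    rw [mgf] at mgf_eq
    rw [mgf_eq, gaussianPDF, gaussianPDF, ← ENNReal.ofReal_mul (gaussianPDFReal_nonneg m v y),
      gaussianPDFReal, gaussianPDFReal, ← Real.exp_sub, mul_assoc, ← Real.exp_add]
    congr 3
    have : (v : ℝ) ≠ 0 := by exact_mod_cast hv
    field_simp
    ring
  rw [Measure.tilted, gaussianReal_of_var_ne_zero (m + v * t) hv, ← funext pdf_mul_density]
  nth_rw 1 [gaussianReal_of_var_ne_zero m hv]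
  rw [← withDensity_mul _ (measurable_gaussianPDF m v) (by fun_prop)]
  rfl

lemma integral_log_le_log_integral {Ω : Type*} [MeasurableSpace Ω] {μ : Measure Ω}
    [IsProbabilityMeasure μ] {f : Ω → ℝ} (hpos : ∀ ω, 0 < f ω) (hf : Integrable f μ)
    (hlog : Integrable (fun ω ↦ Real.log (f ω)) μ) :
    ∫ ω, Real.log (f ω) ∂μ ≤ Real.log (∫ ω, f ω ∂μ) := by
  have hexp (ω : Ω) : Real.exp (Real.log (f ω)) = f ω := Real.exp_log (hpos ω)
  have jensen : Real.exp (∫ ω, Real.log (f ω) ∂μ) ≤ ∫ ω, f ω ∂μ := by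
    simpa only [Function.comp_def, hexp] using
      convexOn_exp.map_integral_le Real.continuous_exp.continuousOn isClosed_univ
        (by simp) hlog (by simpa only [Function.comp_def, hexp] using hf)
  exact (Real.le_log_iff_exp_le ((Real.exp_pos _).trans_le jensen)).2 jensen

lemma sum_piecewise_zero_mul {ι : Type*} [Fintype ι] [DecidableEq ι] (A : Finset ι)
    (t j : ι → ℝ) : ∑ e, A.piecewise t 0 e * j e = ∑ e ∈ A, t e * j e := by
  simp [Finset.piecewise]

/-- The law of independent Gaussian couplings of variance one with means `x e`. -/
def couplingLaw {ι : Type*} [Fintype ι] (x : ι → ℝ) : Measure (ι → ℝ) :=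
  Measure.pi fun e ↦ gaussianReal (x e) 1

/-- The gauge action on couplings, restricted to the bonds in `A`: the coupling of a bond `e ∈ A`
is multiplied by the sign `s e`, the other couplings are left alone. -/
def flipOn {ι : Type*} [DecidableEq ι] (A : Finset ι) (s : ι → ℤˣ) (j : ι → ℝ) : ι → ℝ :=
  A.piecewise (fun e ↦ s e * j e) j

/-- The Boltzmann weight `exp (∑_{e ∈ A} x e * j e * s e)` on the bond set `A`, as a function of the
bond signs `s e`, which for the Edwards–Anderson model are the products of the two spins of `e`. -/
def boltzmannWeight {ι : Type*} (x : ι → ℝ) (A : Finset ι) (s : ι → ℤˣ) (j : ι → ℝ) : ℝ :=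
  Real.exp (∑ e ∈ A, x e * j e * s e)

section CouplingLaw

variable {ι : Type*} [Fintype ι] (x : ι → ℝ)

instance : IsProbabilityMeasure (couplingLaw x) := by
  unfold couplingLaw; infer_instance

lemma integrable_eval_couplingLaw (e : ι) : Integrable (fun j ↦ j e) (couplingLaw x) :=
  (measurePreserving_eval (fun e ↦ gaussianReal (x e) 1) e).integrable_comp_of_integrable
    (memLp_one_iff_integrable.1 (memLp_id_gaussianReal 1))

lemma integral_eval_couplingLaw (e : ι) : ∫ j, j e ∂couplingLaw x = x e :=
  (integral_comp_eval (μ := fun e ↦ gaussianReal (x e) 1) (f := fun y ↦ y) (by fun_prop)).trans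
    integral_id_gaussianReal

lemma integrable_exp_sum_mul_couplingLaw (t : ι → ℝ) :
    Integrable (fun j ↦ Real.exp (∑ e, t e * j e)) (couplingLaw x) := by
  simp_rw [Real.exp_sum]
  exact Integrable.fintype_prod fun e ↦ integrable_exp_mul_gaussianReal (t e)

lemma integral_exp_sum_mul_couplingLaw (t : ι → ℝ) :
    ∫ j, Real.exp (∑ e, t e * j e) ∂couplingLaw x =
      Real.exp (∑ e, (x e * t e + t e ^ 2 / 2)) := by
  simp_rw [Real.exp_sum]
  refine (integral_fintype_prod_eq_prod fun e y ↦ Real.exp (t e * y)).trans ?_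
  refine Finset.prod_congr rfl fun e _ ↦ ?_
  simpa [mgf] using congrFun (mgf_fun_id_gaussianReal (μ := x e) (v := 1)) (t e)

lemma couplingLaw_tilted (t : ι → ℝ) :
    (couplingLaw x).tilted (fun j ↦ ∑ e, t e * j e) = couplingLaw (x + t) := by
  refine (pi_tilted _ fun e y ↦ t e * y).trans ?_
  simp [gaussianReal_tilted_mul, couplingLaw]

end CouplingLaw

section BoltzmannWeight

variable {ι : Type*} (x : ι → ℝ) (A : Finset ι) (s : ι → ℤˣ) (j : ι → ℝ)

lemma boltzmannWeight_pos : 0 < boltzmannWeight x A s j := Real.exp_pos _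

lemma measurable_boltzmannWeight : Measurable (boltzmannWeight x A s) := by
  unfold boltzmannWeight; fun_prop

lemma boltzmannWeight_div_nonneg (t : ι → ℤˣ) :
    0 ≤ boltzmannWeight x A s j / boltzmannWeight x A t j :=
  (div_pos (boltzmannWeight_pos ..) (boltzmannWeight_pos ..)).le

lemma measurable_ofReal_boltzmannWeight_div (t : ι → ℤˣ) : Measurable fun j ↦
    ENNReal.ofReal (boltzmannWeight x A s j / boltzmannWeight x A t j) :=
  ((measurable_boltzmannWeight x A s).div (measurable_boltzmannWeight x A t)).ennreal_ofReal

lemma log_boltzmannWeight_one :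
    Real.log (boltzmannWeight x A 1 j) = ∑ e ∈ A, x e * j e := by
  simp [boltzmannWeight]

variable [DecidableEq ι]

lemma boltzmannWeight_mul_sdiff {A B : Finset ι} (hAB : A ⊆ B) :
    boltzmannWeight x A s j * boltzmannWeight x (B \ A) s j = boltzmannWeight x B s j := by
  rw [boltzmannWeight, boltzmannWeight, ← Real.exp_add, add_comm, Finset.sum_sdiff hAB,
    boltzmannWeight]

lemma measurable_flipOn : Measurable (flipOn A s) := by
  refine measurable_pi_lambda _ fun e ↦ ?_
  by_cases he : e ∈ A <;> simp only [flipOn, Finset.piecewise, he, if_true, if_false] <;> fun_prop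

lemma boltzmannWeight_flipOn {A B : Finset ι} (hAB : A ⊆ B) (t : ι → ℤˣ) :
    boltzmannWeight x A t (flipOn B s j) = boltzmannWeight x A (s * t) j := by
  refine congrArg Real.exp (Finset.sum_congr rfl fun e he ↦ ?_)
  simp only [flipOn, Finset.piecewise_eq_of_mem _ _ _ (hAB he), Pi.mul_apply, Units.val_mul,
    Int.cast_mul]
  ring

lemma boltzmannWeight_flipOn_of_disjoint {A B : Finset ι} (hAB : Disjoint A B) (t : ι → ℤˣ) :
    boltzmannWeight x A t (flipOn B s j) = boltzmannWeight x A t j := by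
  refine congrArg Real.exp (Finset.sum_congr rfl fun e he ↦ ?_)
  rw [flipOn, Finset.piecewise_eq_of_notMem _ _ _ (Finset.disjoint_left.1 hAB he)]

end BoltzmannWeight

section Nishimori

variable {ι : Type*} [Fintype ι] [DecidableEq ι] (x : ι → ℝ) (A : Finset ι) (s : ι → ℤˣ)

lemma couplingLaw_map_flipOn :
    (couplingLaw x).map (flipOn A s) = couplingLaw (flipOn A s x) := by
  let flipAt (e : ι) (y : ℝ) : ℝ := if e ∈ A then s e * y else y
  have map_flipAt (e : ι) :
      (gaussianReal (x e) 1).map (flipAt e) = gaussianReal (flipOn A s x e) 1 := by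
    by_cases he : e ∈ A
    · rcases Int.units_eq_one_or (s e) with h | h <;>
        simp [flipAt, he, h, flipOn, gaussianReal_map_neg]
    · simp [flipAt, he, flipOn]
  have measurable_flipAt (e : ι) : Measurable (flipAt e) := by
    by_cases he : e ∈ A <;> simp only [flipAt, he, if_true, if_false] <;> fun_prop
  calc (couplingLaw x).map (flipOn A s)
      = Measure.pi fun e ↦ (gaussianReal (x e) 1).map (flipAt e) :=
        Measure.pi_map_pi fun e ↦ (measurable_flipAt e).aemeasurable
    _ = couplingLaw (flipOn A s x) := by simp_rw [map_flipAt, couplingLaw]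

lemma boltzmannWeight_div_one (j : ι → ℝ) :
    boltzmannWeight x A s j / boltzmannWeight x A 1 j =
      Real.exp (∑ e, A.piecewise (fun e ↦ x e * (s e - 1)) 0 e * j e) := by
  rw [boltzmannWeight, boltzmannWeight, ← Real.exp_sub, ← Finset.sum_sub_distrib,
    sum_piecewise_zero_mul]
  refine congrArg Real.exp (Finset.sum_congr rfl fun e _ ↦ ?_)
  simp only [Pi.one_apply, Units.val_one, Int.cast_one]
  ring

lemma couplingLaw_map_flipOn_eq_withDensity :
    (couplingLaw x).map (flipOn A s) = (couplingLaw x).withDensity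
      fun j ↦ ENNReal.ofReal (boltzmannWeight x A s j / boltzmannWeight x A 1 j) := by
  set t := A.piecewise (fun e ↦ x e * (s e - 1)) 0 with ht
  have add_eq_flipOn : x + t = flipOn A s x := by
    funext e
    by_cases he : e ∈ A
    · simp only [ht, flipOn, Pi.add_apply, Finset.piecewise_eq_of_mem _ _ _ he]
      ring
    · simp [ht, flipOn, he]
  -- On the Nishimori line `t = 0` or `t = -2 x` at each bond, so that `x t + t ^ 2 / 2 = 0`.
  have mgf_eq_one : ∫ j, Real.exp (∑ e, t e * j e) ∂couplingLaw x = 1 := by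
    rw [integral_exp_sum_mul_couplingLaw, Finset.sum_eq_zero, Real.exp_zero]
    intro e _
    by_cases he : e ∈ A
    · rcases Int.units_eq_one_or (s e) with h | h
      · simp [ht, he, h]
      · rw [ht, Finset.piecewise_eq_of_mem _ _ _ he, h, Units.val_neg, Units.val_one, Int.cast_neg,
          Int.cast_one]
        ring
    · simp [ht, he]
  rw [couplingLaw_map_flipOn, ← add_eq_flipOn, ← couplingLaw_tilted, Measure.tilted, mgf_eq_one]
  simp_rw [boltzmannWeight_div_one, div_one, ht]

variable {f : (ι → ℝ) → ℝ}

lemma integrable_boltzmannWeight_div_mul_iff (hf : Measurable f) :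
    Integrable (fun j ↦ boltzmannWeight x A s j / boltzmannWeight x A 1 j * f j) (couplingLaw x) ↔
      Integrable (fun j ↦ f (flipOn A s j)) (couplingLaw x) := by
  calc
    _ ↔ Integrable f ((couplingLaw x).map (flipOn A s)) := by
      rw [couplingLaw_map_flipOn_eq_withDensity, integrable_withDensity_iff_integrable_smul'
        (measurable_ofReal_boltzmannWeight_div x A s 1) (by simp)]
      simp_rw [ENNReal.toReal_ofReal (boltzmannWeight_div_nonneg ..), smul_eq_mul]
    _ ↔ _ := integrable_map_measure hf.aestronglyMeasurable (measurable_flipOn A s).aemeasurable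

lemma integral_boltzmannWeight_div_mul (hf : Measurable f) :
    ∫ j, boltzmannWeight x A s j / boltzmannWeight x A 1 j * f j ∂couplingLaw x =
      ∫ j, f (flipOn A s j) ∂couplingLaw x := by
  calc
    _ = ∫ j, f j ∂(couplingLaw x).map (flipOn A s) := by
      rw [couplingLaw_map_flipOn_eq_withDensity, integral_withDensity_eq_integral_toReal_smul
        (measurable_ofReal_boltzmannWeight_div x A s 1) (by simp)]
      simp_rw [ENNReal.toReal_ofReal (boltzmannWeight_div_nonneg ..), smul_eq_mul]
    _ = _ := integral_map (measurable_flipOn A s).aemeasurable hf.aestronglyMeasurable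

end Nishimori

section InverseWeight

variable {ι : Type*} [Fintype ι] (x : ι → ℝ) (A : Finset ι)

lemma inv_boltzmannWeight_one [DecidableEq ι] (j : ι → ℝ) :
    (boltzmannWeight x A 1 j)⁻¹ = Real.exp (∑ e, A.piecewise (-x) 0 e * j e) := by
  rw [sum_piecewise_zero_mul, boltzmannWeight, ← Real.exp_neg]
  simp

lemma integrable_inv_boltzmannWeight_one :
    Integrable (fun j ↦ (boltzmannWeight x A 1 j)⁻¹) (couplingLaw x) := by
  classical
  simp_rw [inv_boltzmannWeight_one]
  exact integrable_exp_sum_mul_couplingLaw x _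

lemma integral_inv_boltzmannWeight_one :
    ∫ j, (boltzmannWeight x A 1 j)⁻¹ ∂couplingLaw x = Real.exp (-(∑ e ∈ A, x e ^ 2) / 2) := by
  classical
  simp_rw [inv_boltzmannWeight_one, integral_exp_sum_mul_couplingLaw]
  congr 1
  calc ∑ e, (x e * A.piecewise (-x) 0 e + A.piecewise (-x) 0 e ^ 2 / 2)
      = ∑ e, A.piecewise (fun e ↦ -(x e ^ 2 / 2)) 0 e * 1 := by
        refine Finset.sum_congr rfl fun e _ ↦ ?_
        by_cases he : e ∈ A
        · simp only [Finset.piecewise_eq_of_mem _ _ _ he, Pi.neg_apply]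
          ring
        · simp [he]
    _ = -(∑ e ∈ A, x e ^ 2) / 2 := by
        rw [sum_piecewise_zero_mul, neg_div, Finset.sum_div, ← Finset.sum_neg_distrib]
        simp_rw [mul_one]

end InverseWeight

/-- The partition function `∑_S exp (∑_{e ∈ A} x e * j e * σ S e)` on the bond set `A`, where `S`
runs over a finite group `G` of spin configurations acting on the bond signs through `σ`. -/
def partitionFunction {ι G : Type*} [Group G] [Fintype G] (σ : G →* ι → ℤˣ) (x : ι → ℝ)
    (A : Finset ι) (j : ι → ℝ) : ℝ :=
  ∑ S, boltzmannWeight x A (σ S) j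

/-- The quenched pressure `[ln Z]` on the bond set `A`. The couplings of all of `ι` are averaged
over, although only those in `A` enter, so that pressures of different bond sets can be compared on
one probability space. -/
def quenchedPressure {ι G : Type*} [Fintype ι] [Group G] [Fintype G] (σ : G →* ι → ℤˣ) (x : ι → ℝ)
    (A : Finset ι) : ℝ :=
  ∫ j, Real.log (partitionFunction σ x A j) ∂couplingLaw x

/-- The Gibbs probability of the spin configuration `S` for the bond set `A`. -/
def gibbsWeight {ι G : Type*} [Group G] [Fintype G] (σ : G →* ι → ℤˣ) (x : ι → ℝ)
    (A : Finset ι) (S : G) (j : ι → ℝ) : ℝ :=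
  boltzmannWeight x A (σ S) j / partitionFunction σ x A j

section PartitionFunction

variable {ι G : Type*} [Group G] [Fintype G] (σ : G →* ι → ℤˣ) (x : ι → ℝ) (A : Finset ι)

lemma partitionFunction_pos (j : ι → ℝ) : 0 < partitionFunction σ x A j :=
  Finset.sum_pos (fun _ _ ↦ boltzmannWeight_pos ..) Finset.univ_nonempty

lemma measurable_partitionFunction : Measurable (partitionFunction σ x A) :=
  Finset.measurable_fun_sum _ fun S _ ↦ measurable_boltzmannWeight x A (σ S)

lemma boltzmannWeight_le_partitionFunction (S : G) (j : ι → ℝ) :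
    boltzmannWeight x A (σ S) j ≤ partitionFunction σ x A j :=
  Finset.single_le_sum (f := fun S ↦ boltzmannWeight x A (σ S) j)
    (fun S _ ↦ (boltzmannWeight_pos x A (σ S) j).le) (Finset.mem_univ S)

lemma one_le_partitionFunction_div_boltzmannWeight_one (j : ι → ℝ) :
    1 ≤ partitionFunction σ x A j / boltzmannWeight x A 1 j := by
  rw [one_le_div (boltzmannWeight_pos ..), ← map_one σ]
  exact boltzmannWeight_le_partitionFunction σ x A 1 j

lemma measurable_gibbsWeight (S : G) : Measurable (gibbsWeight σ x A S) :=
  (measurable_boltzmannWeight x A (σ S)).div (measurable_partitionFunction σ x A)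

lemma sum_gibbsWeight (j : ι → ℝ) : ∑ S, gibbsWeight σ x A S j = 1 := by
  simp_rw [gibbsWeight, ← Finset.sum_div]
  exact div_self (partitionFunction_pos σ x A j).ne'

lemma abs_gibbsWeight_le_one (S : G) (j : ι → ℝ) : |gibbsWeight σ x A S j| ≤ 1 := by
  rw [gibbsWeight, abs_of_pos (div_pos (boltzmannWeight_pos ..) (partitionFunction_pos ..)),
    div_le_one (partitionFunction_pos ..)]
  exact boltzmannWeight_le_partitionFunction σ x A S j

lemma abs_log_partitionFunction_le (j : ι → ℝ) :
    |Real.log (partitionFunction σ x A j)| ≤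
      Real.log (Fintype.card G) + ∑ e ∈ A, |x e| * |j e| := by
  have energy_le (S : G) : |∑ e ∈ A, x e * j e * σ S e| ≤ ∑ e ∈ A, |x e| * |j e| := by
    refine (Finset.abs_sum_le_sum_abs _ _).trans_eq (Finset.sum_congr rfl fun e _ ↦ ?_)
    rcases Int.units_eq_one_or (σ S e) with h | h <;> simp [h, abs_mul]
  have log_card_nonneg : 0 ≤ Real.log (Fintype.card G) := Real.log_natCast_nonneg _
  have lower : -∑ e ∈ A, |x e| * |j e| ≤ Real.log (partitionFunction σ x A j) := by
    refine (neg_le_of_abs_le (energy_le 1)).trans ?_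
    rw [Real.le_log_iff_exp_le (partitionFunction_pos σ x A j)]
    exact boltzmannWeight_le_partitionFunction σ x A 1 j
  have upper : Real.log (partitionFunction σ x A j) ≤
      Real.log (Fintype.card G) + ∑ e ∈ A, |x e| * |j e| := by
    rw [Real.log_le_iff_le_exp (partitionFunction_pos σ x A j), Real.exp_add,
      Real.exp_log (by exact_mod_cast Fintype.card_pos), ← nsmul_eq_mul]
    exact Finset.sum_le_card_nsmul _ _ _ fun S _ ↦ Real.exp_le_exp.2 (le_of_abs_le (energy_le S))
  exact abs_le.2 ⟨by linarith, upper⟩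

section Nested

variable [DecidableEq ι] {A} {B : Finset ι}

lemma partitionFunction_flipOn (hAB : A ⊆ B) (T : G) (j : ι → ℝ) :
    partitionFunction σ x A (flipOn B (σ T) j) = partitionFunction σ x A j := by
  simp_rw [partitionFunction, boltzmannWeight_flipOn _ _ _ hAB, ← map_mul]
  exact Fintype.sum_equiv (Equiv.mulLeft T) _ _ fun S ↦ rfl

lemma gibbsWeight_one_flipOn (hAB : A ⊆ B) (S : G) (j : ι → ℝ) :
    gibbsWeight σ x A 1 (flipOn B (σ S) j) = gibbsWeight σ x A S j := by
  rw [gibbsWeight, partitionFunction_flipOn σ x hAB, boltzmannWeight_flipOn _ _ _ hAB, map_one,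
    mul_one, gibbsWeight]

lemma partitionFunction_div_boltzmannWeight_one_mul_div (hAB : A ⊆ B) (j : ι → ℝ) :
    partitionFunction σ x B j / boltzmannWeight x B 1 j *
        (partitionFunction σ x A j / partitionFunction σ x B j) =
      partitionFunction σ x A j / boltzmannWeight x A 1 j *
        (boltzmannWeight x (B \ A) 1 j)⁻¹ := by
  rw [← boltzmannWeight_mul_sdiff x 1 j hAB]
  have := (partitionFunction_pos σ x B j).ne'
  field_simp

lemma partitionFunction_div_boltzmannWeight_one_mul_gibbsWeight (hAB : A ⊆ B) (j : ι → ℝ) :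
    partitionFunction σ x B j / boltzmannWeight x B 1 j * gibbsWeight σ x A 1 j =
      partitionFunction σ x B j /
        (partitionFunction σ x A j * boltzmannWeight x (B \ A) 1 j) := by
  rw [gibbsWeight, map_one, ← boltzmannWeight_mul_sdiff x 1 j hAB]
  have := (boltzmannWeight_pos x A 1 j).ne'
  field_simp

end Nested

variable [Fintype ι]

lemma integrable_log_partitionFunction :
    Integrable (fun j ↦ Real.log (partitionFunction σ x A j)) (couplingLaw x) :=
  .mono' ((integrable_const _).add (integrable_finsetSum _ fun e _ ↦
      (integrable_eval_couplingLaw x e).abs.const_mul _))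
    (measurable_partitionFunction σ x A).log.aestronglyMeasurable
    (.of_forall (abs_log_partitionFunction_le σ x A))

lemma integrable_gibbsWeight (S : G) : Integrable (gibbsWeight σ x A S) (couplingLaw x) :=
  .of_bound (measurable_gibbsWeight σ x A S).aestronglyMeasurable 1
    (.of_forall (abs_gibbsWeight_le_one σ x A S))

variable [DecidableEq ι] {f : (ι → ℝ) → ℝ}

lemma integrable_partitionFunction_div_mul (hf : Measurable f)
    (hflip : ∀ S, Integrable (fun j ↦ f (flipOn A (σ S) j)) (couplingLaw x)) :
    Integrable (fun j ↦ partitionFunction σ x A j / boltzmannWeight x A 1 j * f j)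
      (couplingLaw x) := by
  simp_rw [partitionFunction, Finset.sum_div, Finset.sum_mul]
  exact integrable_finsetSum _ fun S _ ↦
    (integrable_boltzmannWeight_div_mul_iff x A (σ S) hf).2 (hflip S)

lemma integral_partitionFunction_div_mul (hf : Measurable f)
    (hflip : ∀ S, Integrable (fun j ↦ f (flipOn A (σ S) j)) (couplingLaw x)) :
    ∫ j, partitionFunction σ x A j / boltzmannWeight x A 1 j * f j ∂couplingLaw x =
      ∫ j, ∑ S, f (flipOn A (σ S) j) ∂couplingLaw x := by
  simp_rw [partitionFunction, Finset.sum_div, Finset.sum_mul]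
  rw [integral_finsetSum _ fun S _ ↦
    (integrable_boltzmannWeight_div_mul_iff x A (σ S) hf).2 (hflip S),
    integral_finsetSum _ fun S _ ↦ hflip S]
  simp_rw [integral_boltzmannWeight_div_mul x A (σ _) hf]

lemma integral_partitionFunction_div_mul_of_invariant (hf : Measurable f)
    (hint : Integrable f (couplingLaw x)) (hinv : ∀ S j, f (flipOn A (σ S) j) = f j) :
    ∫ j, partitionFunction σ x A j / boltzmannWeight x A 1 j * f j ∂couplingLaw x =
      Fintype.card G * ∫ j, f j ∂couplingLaw x := by
  rw [integral_partitionFunction_div_mul σ x A hf fun S ↦ by simpa only [hinv] using hint]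
  simp_rw [hinv, Finset.sum_const, Finset.card_univ, nsmul_eq_mul, integral_const_mul]

end PartitionFunction

section Comparison

variable {ι G : Type*} [Fintype ι] [Group G] [Fintype G]
  (σ : G →* ι → ℤˣ) (x : ι → ℝ) {A B : Finset ι}

lemma integrable_partitionFunction_div_partitionFunction (hAB : A ⊆ B) :
    Integrable (fun j ↦ partitionFunction σ x A j / partitionFunction σ x B j)
      (couplingLaw x) := by
  classical
  have weighted : Integrable (fun j ↦ partitionFunction σ x B j / boltzmannWeight x B 1 j *
      (partitionFunction σ x A j / partitionFunction σ x B j)) (couplingLaw x) := by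
    simp_rw [partitionFunction_div_boltzmannWeight_one_mul_div σ x hAB]
    refine integrable_partitionFunction_div_mul σ x A (measurable_boltzmannWeight ..).inv
      fun S ↦ ?_
    simpa only [boltzmannWeight_flipOn_of_disjoint _ _ _ Finset.sdiff_disjoint] using
      integrable_inv_boltzmannWeight_one x (B \ A)
  refine weighted.mono' ((measurable_partitionFunction σ x A).div
    (measurable_partitionFunction σ x B)).aestronglyMeasurable (.of_forall fun j ↦ ?_)
  have ratio_nonneg :=
    (div_pos (partitionFunction_pos σ x A j) (partitionFunction_pos σ x B j)).le
  rw [Real.norm_of_nonneg ratio_nonneg]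
  exact le_mul_of_one_le_left ratio_nonneg
    (one_le_partitionFunction_div_boltzmannWeight_one σ x B j)

variable [DecidableEq ι]

lemma integral_partitionFunction_div_partitionFunction (hAB : A ⊆ B) :
    ∫ j, partitionFunction σ x A j / partitionFunction σ x B j ∂couplingLaw x =
      Real.exp (-(∑ e ∈ B \ A, x e ^ 2) / 2) := by
  refine mul_left_cancel₀ (Nat.cast_ne_zero.2 (Fintype.card_ne_zero (α := G))) ?_
  rw [← integral_inv_boltzmannWeight_one, ← integral_partitionFunction_div_mul_of_invariant σ x B,
    ← integral_partitionFunction_div_mul_of_invariant σ x A]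
  · simp_rw [partitionFunction_div_boltzmannWeight_one_mul_div σ x hAB]
  · exact (measurable_boltzmannWeight ..).inv
  · exact integrable_inv_boltzmannWeight_one x (B \ A)
  · intro S j
    rw [boltzmannWeight_flipOn_of_disjoint _ _ _ Finset.sdiff_disjoint]
  · exact (measurable_partitionFunction σ x A).div (measurable_partitionFunction σ x B)
  · exact integrable_partitionFunction_div_partitionFunction σ x hAB
  · intro S j
    rw [partitionFunction_flipOn σ x hAB, partitionFunction_flipOn σ x subset_rfl]

lemma integrable_partitionFunction_div_mul_boltzmannWeight (hAB : A ⊆ B) :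
    Integrable (fun j ↦ partitionFunction σ x B j /
      (partitionFunction σ x A j * boltzmannWeight x (B \ A) 1 j)) (couplingLaw x) := by
  simp_rw [← partitionFunction_div_boltzmannWeight_one_mul_gibbsWeight σ x hAB]
  refine integrable_partitionFunction_div_mul σ x B (measurable_gibbsWeight ..) fun S ↦ ?_
  simpa only [gibbsWeight_one_flipOn σ x hAB] using integrable_gibbsWeight σ x A S

lemma integral_partitionFunction_div_mul_boltzmannWeight (hAB : A ⊆ B) :
    ∫ j, partitionFunction σ x B j /
      (partitionFunction σ x A j * boltzmannWeight x (B \ A) 1 j) ∂couplingLaw x = 1 := by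
  simp_rw [← partitionFunction_div_boltzmannWeight_one_mul_gibbsWeight σ x hAB]
  rw [integral_partitionFunction_div_mul σ x B (measurable_gibbsWeight ..) fun S ↦ by
    simpa only [gibbsWeight_one_flipOn σ x hAB] using integrable_gibbsWeight σ x A S]
  simp_rw [gibbsWeight_one_flipOn σ x hAB, sum_gibbsWeight]
  simp

theorem sum_sq_div_two_le_quenchedPressure_sub (hAB : A ⊆ B) :
    (∑ e ∈ B \ A, x e ^ 2) / 2 ≤ quenchedPressure σ x B - quenchedPressure σ x A := by
  have log_ratio (j : ι → ℝ) : Real.log (partitionFunction σ x A j / partitionFunction σ x B j) =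
      Real.log (partitionFunction σ x A j) - Real.log (partitionFunction σ x B j) :=
    Real.log_div (partitionFunction_pos ..).ne' (partitionFunction_pos ..).ne'
  have integrable_A := integrable_log_partitionFunction σ x A
  have integrable_B := integrable_log_partitionFunction σ x B
  have jensen := integral_log_le_log_integral
    (fun j ↦ div_pos (partitionFunction_pos σ x A j) (partitionFunction_pos σ x B j))
    (integrable_partitionFunction_div_partitionFunction σ x hAB)
    ((integrable_A.sub integrable_B).congr (.of_forall fun j ↦ (log_ratio j).symm))
  simp_rw [log_ratio] at jensen
  rw [integral_sub integrable_A integrable_B,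
    integral_partitionFunction_div_partitionFunction σ x hAB, Real.log_exp] at jensen
  rw [quenchedPressure, quenchedPressure]
  linarith

theorem quenchedPressure_sub_le_sum_sq (hAB : A ⊆ B) :
    quenchedPressure σ x B - quenchedPressure σ x A ≤ ∑ e ∈ B \ A, x e ^ 2 := by
  have log_ratio (j : ι → ℝ) : Real.log (partitionFunction σ x B j /
      (partitionFunction σ x A j * boltzmannWeight x (B \ A) 1 j)) =
      Real.log (partitionFunction σ x B j) -
        (Real.log (partitionFunction σ x A j) + ∑ e ∈ B \ A, x e * j e) := by
    rw [Real.log_div (partitionFunction_pos ..).ne'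
        (mul_pos (partitionFunction_pos ..) (boltzmannWeight_pos ..)).ne',
      Real.log_mul (partitionFunction_pos ..).ne' (boltzmannWeight_pos ..).ne',
      log_boltzmannWeight_one]
  have integrable_energy (e : ι) := (integrable_eval_couplingLaw x e).const_mul (x e)
  have integrable_sum := integrable_finsetSum (B \ A) fun e _ ↦ integrable_energy e
  have integrable_A := integrable_log_partitionFunction σ x A
  have integrable_B := integrable_log_partitionFunction σ x B
  have integral_sum : ∫ j, ∑ e ∈ B \ A, x e * j e ∂couplingLaw x = ∑ e ∈ B \ A, x e ^ 2 := by
    rw [integral_finsetSum _ fun e _ ↦ integrable_energy e]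
    simp_rw [integral_const_mul, integral_eval_couplingLaw, sq]
  have jensen := integral_log_le_log_integral
    (fun j ↦ div_pos (partitionFunction_pos σ x B j)
      (mul_pos (partitionFunction_pos σ x A j) (boltzmannWeight_pos x (B \ A) 1 j)))
    (integrable_partitionFunction_div_mul_boltzmannWeight σ x hAB)
    ((integrable_B.sub (integrable_A.fun_add integrable_sum)).congr
      (.of_forall fun j ↦ (log_ratio j).symm))
  simp_rw [log_ratio] at jensen
  rw [integral_sub integrable_B (integrable_A.fun_add integrable_sum),
    integral_add integrable_A integrable_sum, integral_sum,
    integral_partitionFunction_div_mul_boltzmannWeight σ x hAB, Real.log_one] at jensen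
  rw [quenchedPressure, quenchedPressure]
  linarith

end Comparison

section EdwardsAnderson

/-- The gauge homomorphism of the Edwards–Anderson model, sending a configuration of Ising spins to
its bond signs, the products of the spins at the two ends of each pair of sites. -/
def bondSign (V : Type*) : (V → ℤˣ) →* V × V → ℤˣ where
  toFun S e := S e.1 * S e.2
  map_one' := by ext; simp
  map_mul' S T := by ext; simp [mul_mul_mul_comm]

/-- The Ising spins `Bool` of `EApressure` as signs. -/
def boolEquivUnits : Bool ≃ ℤˣ where
  toFun s := if s then 1 else -1
  invFun u := u = 1
  left_inv s := by cases s <;> simp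
  right_inv u := by rcases Int.units_eq_one_or u with rfl | rfl <;> simp

lemma spin_eq_boolEquivUnits (s : Bool) : spin s = boolEquivUnits s := by
  cases s <;> simp [spin, boolEquivUnits]

lemma integral_restrict_couplingLaw {ι : Type*} [Fintype ι] (x : ι → ℝ) (A : Finset ι)
    {f : (A → ℝ) → ℝ} (hf : Measurable f) :
    ∫ j, f (A.restrict j) ∂couplingLaw x =
      ∫ j, f j ∂Measure.pi fun e : A ↦ gaussianReal (x e) 1 := by
  rw [couplingLaw, ← Measure.infinitePi_eq_pi]
  exact integral_restrict_infinitePi (μ := fun e ↦ gaussianReal (x e) 1) hf.aestronglyMeasurable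

variable {V : Type*} [Fintype V] [DecidableEq V] (x : ℝ)

lemma EApressure_eq_quenchedPressure (E : Finset (V × V)) :
    EApressure E x = quenchedPressure (bondSign V) (fun _ ↦ x) E := by
  have partitionFunction_restrict (j : V × V → ℝ) : partitionFunction (bondSign V) (fun _ ↦ x) E j =
      ∑ S : V → Bool, Real.exp (∑ e : E, x * E.restrict j e *
        (spin (S (e : V × V).1) * spin (S (e : V × V).2))) := by
    refine (Fintype.sum_equiv ((Equiv.refl V).arrowCongr boolEquivUnits) _
      (fun S ↦ boltzmannWeight (fun _ ↦ x) E (bondSign V S) j) fun S ↦ congrArg Real.exp ?_).symm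
    rw [← Finset.sum_coe_sort E]
    simp [spin_eq_boolEquivUnits, bondSign]
  rw [quenchedPressure]
  simp_rw [partitionFunction_restrict]
  exact (integral_restrict_couplingLaw (fun _ ↦ x) E (f := fun j ↦ Real.log (∑ S : V → Bool,
    Real.exp (∑ e : E, x * j e * (spin (S (e : V × V).1) * spin (S (e : V × V).2)))))
    (by fun_prop)).symm

theorem periodic_free_pressure_difference_surface_bounds_general {E F : Finset (V × V)}
    (hEF : E ⊆ F) :
    x ^ 2 / 2 * (F \ E).card ≤ EApressure F x - EApressure E x ∧
      EApressure F x - EApressure E x ≤ x ^ 2 * (F \ E).card := by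
  have lower := sum_sq_div_two_le_quenchedPressure_sub (bondSign V) (fun _ ↦ x) hEF
  have upper := quenchedPressure_sub_le_sum_sq (bondSign V) (fun _ ↦ x) hEF
  rw [Finset.sum_const, nsmul_eq_mul] at lower upper
  rw [EApressure_eq_quenchedPressure, EApressure_eq_quenchedPressure]
  constructor <;> linarith

end EdwardsAnderson

section Cut

lemma cubeBonds_subset_torusBonds (d L : ℕ) : cubeBonds d L ⊆ torusBonds d L := by
  refine Finset.monotone_filter_right _ fun p _ ⟨i, off_i, at_i⟩ ↦ ⟨i, off_i, ?_⟩
  rw [Nat.mod_eq_of_lt (at_i ▸ (p.2 i).isLt), at_i]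

variable {d L : ℕ} [NeZero L]

/-- The bond of the torus leaving the site `q.2` in the positive direction `q.1`. The addition in
`Fin L` is modulo `L`. -/
def bondFrom (q : Fin d × (Fin d → Fin L)) : (Fin d → Fin L) × (Fin d → Fin L) :=
  (q.2, Function.update q.2 q.1 (q.2 q.1 + 1))

lemma val_eq_add_one_mod_iff (a b : Fin L) : (b : ℕ) = (a + 1) % L ↔ b = a + 1 := by
  rw [Fin.ext_iff, Fin.val_add, Fin.val_one', Nat.add_mod_mod]

lemma val_eq_add_one_iff (a b : Fin L) : (b : ℕ) = a + 1 ↔ a ≠ -1 ∧ b = a + 1 := by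
  have wraps : a = -1 ↔ (a + 1 : ℕ) = L := by
    rw [eq_neg_iff_add_eq_zero, Fin.ext_iff, Fin.val_add, Fin.val_one', Nat.add_mod_mod,
      Fin.val_zero, ← Nat.dvd_iff_mod_eq_zero]
    exact ⟨fun h ↦ le_antisymm a.isLt (Nat.le_of_dvd a.val.succ_pos h), fun h ↦ h.symm.dvd⟩
  rw [← val_eq_add_one_mod_iff, ne_eq, wraps]
  constructor
  · intro h
    exact ⟨by omega, by rw [Nat.mod_eq_of_lt (by omega), h]⟩
  · rintro ⟨hne, h⟩
    rwa [Nat.mod_eq_of_lt (by omega)] at h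

lemma bondFrom_eq_iff (i : Fin d) (n : Fin d → Fin L) (p : (Fin d → Fin L) × (Fin d → Fin L)) :
    bondFrom (i, n) = p ↔ n = p.1 ∧ (∀ k ≠ i, p.2 k = p.1 k) ∧ p.2 i = p.1 i + 1 := by
  rw [bondFrom, Prod.ext_iff, Function.update_eq_iff]
  refine and_congr_right fun h ↦ ?_
  subst h
  rw [and_comm, eq_comm (b := p.2 i)]
  simp_rw [eq_comm (b := p.2 _)]

lemma torusBonds_eq_image : torusBonds d L = Finset.univ.image bondFrom := by
  ext p
  simp [torusBonds, bondFrom_eq_iff, val_eq_add_one_mod_iff]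

lemma cubeBonds_eq_image :
    cubeBonds d L =
      (Finset.univ.filter fun q : Fin d × (Fin d → Fin L) ↦ q.2 q.1 ≠ -1).image bondFrom := by
  ext p
  simp [cubeBonds, bondFrom_eq_iff, val_eq_add_one_iff, and_left_comm]

lemma bondFrom_injective (hL : 2 ≤ L) : Function.Injective (bondFrom (d := d) (L := L)) := by
  rintro ⟨i, n⟩ ⟨k, m⟩ h
  obtain ⟨rfl, off_i, -⟩ := (bondFrom_eq_iff i n _).1 h
  have one_ne_zero : (1 : Fin L) ≠ 0 := by
    rw [ne_eq, Fin.ext_iff, Fin.val_one', Nat.mod_eq_of_lt hL]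
    exact Nat.one_ne_zero
  have i_eq_k : i = k := by
    by_contra hik
    simpa [bondFrom, one_ne_zero] using off_i k (Ne.symm hik)
  rw [i_eq_k]

lemma card_torusBonds_sdiff_cubeBonds (hL : 2 ≤ L) :
    (torusBonds d L \ cubeBonds d L).card = d * L ^ (d - 1) := by
  have card_hyperplane (i : Fin d) :
      (Finset.univ.filter fun n : Fin d → Fin L ↦ n i = -1).card = L ^ (d - 1) := by
    simpa using Fintype.card_filter_piFinset_const Finset.univ i (-1 : Fin L)
  rw [cubeBonds_eq_image, torusBonds_eq_image, ← Finset.image_sdiff _ _ (bondFrom_injective hL),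
    Finset.card_image_of_injective _ (bondFrom_injective hL), ← Finset.compl_eq_univ_sdiff,
    Finset.compl_filter]
  simp_rw [not_not, Finset.card_filter, Fintype.sum_prod_type, ← Finset.card_filter,
    card_hyperplane]
  simp

end Cut

/-- **Theorem 2.** Surface-order bounds for the periodic–free pressure
difference: for `d ≥ 1`, `x > 0` and `L ≥ 2`,
`(x²/2) d L^{d−1} ≤ P_{Π_L} − P_{Λ_L} ≤ x² d L^{d−1}`. -/
theorem periodic_free_pressure_difference_surface_bounds
    (d : ℕ) (hd : 1 ≤ d) (x : ℝ) (hx : 0 < x) (L : ℕ) (hL : 2 ≤ L) :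
    x ^ 2 / 2 * ((d : ℝ) * (L : ℝ) ^ (d - 1)) ≤
        EApressure (torusBonds d L) x - EApressure (cubeBonds d L) x ∧
      EApressure (torusBonds d L) x - EApressure (cubeBonds d L) x ≤
        x ^ 2 * ((d : ℝ) * (L : ℝ) ^ (d - 1)) := by
  have : NeZero L := ⟨by omega⟩
  simpa only [card_torusBonds_sdiff_cubeBonds hL, Nat.cast_mul, Nat.cast_pow] using
    periodic_free_pressure_difference_surface_bounds_general x (cubeBonds_subset_torusBonds d L)

end
end
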